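/- arXiv:0901.4925 — 10 statements merged into one kernel-verified Lean document; each statement's English description precedes it below -/
import Mathlib

section
/- For every real number H with 1/2 < H < 1, one has (2H-1) · ∫₀^∞ ∫₀^∞ e^{-(s+u)} |u-s|^{2H-2} ds du = Γ(2H), where Γ is the Gamma function and the double integral is a Lebesgue integral over [0,∞)². -/
open MeasureTheory Real Set

/-! Off the diagonal, `(s, u) ↦ (min s u, |s - u|)` folds the two triangles of the quadrant
`(0, ∞)²` onto the whole quadrant, each by a unimodular shear, hence doubles Lebesgue measure.
Since `s + u = 2 min s u + |s - u|`, the integrand becomes a product in these coordinates, and the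
double integral equals `2 · ∫ e^{-2m} dm · ∫ e^{-d} d^{2H-2} dd = Γ(2H - 1)`;
the functional equation of `Γ` absorbs the factor `2H - 1`. -/

lemma measurePreserving_restrict_preimage_congr {α β : Type*} [MeasurableSpace α]
    [MeasurableSpace β] {μ : Measure α} {ν : Measure β} {φ ψ : α → β} {t : Set β}
    (hφ : MeasurePreserving φ μ ν) (hψ : Measurable ψ) (ht : MeasurableSet t)
    (heq : EqOn φ ψ (φ ⁻¹' t)) :
    MeasurePreserving ψ (μ.restrict (φ ⁻¹' t)) (ν.restrict t) :=
  (hφ.restrict_preimage ht).congr hψ (heq.aeEq_restrict (hφ.measurable ht))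

lemma restrict_Ioi_prod_Ici_eq_restrict_Ioi_prod_Ioi :
    (volume : Measure (ℝ × ℝ)).restrict (Ioi 0 ×ˢ Ici 0) = volume.restrict (Ioi 0 ×ˢ Ioi 0) :=
  Measure.restrict_congr_set (Measure.set_prod_ae_eq (ae_eq_refl _) Ioi_ae_eq_Ici.symm)

lemma measurePreserving_min_abs_sub_above_diagonal :
    MeasurePreserving (fun z : ℝ × ℝ ↦ (min z.1 z.2, |z.1 - z.2|))
      (volume.restrict {z | 0 < z.1 ∧ z.1 < z.2}) (volume.restrict (Ioi 0 ×ˢ Ioi 0)) := by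
  have preimage_quadrant : (fun z : ℝ × ℝ ↦ (z.1, z.2 - z.1)) ⁻¹' (Ioi 0 ×ˢ Ioi 0) =
      {z | 0 < z.1 ∧ z.1 < z.2} := by
    ext z
    simp
  rw [← preimage_quadrant]
  refine measurePreserving_restrict_preimage_congr (measurePreserving_prod_sub volume volume)
    (by fun_prop) (measurableSet_Ioi.prod measurableSet_Ioi) fun z hz ↦ ?_
  have hlt : z.1 < z.2 := sub_pos.1 hz.2
  simp only [min_eq_left hlt.le, abs_sub_comm z.1, abs_of_pos (sub_pos.2 hlt)]

lemma measurePreserving_min_abs_sub_below_diagonal :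
    MeasurePreserving (fun z : ℝ × ℝ ↦ (min z.1 z.2, |z.1 - z.2|))
      (volume.restrict {z | 0 < z.2 ∧ z.2 ≤ z.1}) (volume.restrict (Ioi 0 ×ˢ Ioi 0)) := by
  have preimage_quadrant : (fun z : ℝ × ℝ ↦ (z.2, z.1 - z.2)) ⁻¹' (Ioi 0 ×ˢ Ici 0) =
      {z | 0 < z.2 ∧ z.2 ≤ z.1} := by
    ext z
    simp
  rw [← preimage_quadrant, ← restrict_Ioi_prod_Ici_eq_restrict_Ioi_prod_Ioi]
  refine measurePreserving_restrict_preimage_congr (measurePreserving_prod_sub_swap volume volume)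
    (by fun_prop) (measurableSet_Ioi.prod measurableSet_Ici) fun z hz ↦ ?_
  have hle : z.2 ≤ z.1 := sub_nonneg.1 hz.2
  simp only [min_eq_right hle, abs_of_nonneg (sub_nonneg.2 hle)]

theorem measurePreserving_min_abs_sub :
    MeasurePreserving (fun z : ℝ × ℝ ↦ (min z.1 z.2, |z.1 - z.2|))
      (volume.restrict (Ioi 0 ×ˢ Ioi 0))
      ((2 : ENNReal) • volume.restrict (Ioi 0 ×ˢ Ioi 0)) := by
  have quadrant_eq : (Ioi 0 ×ˢ Ioi 0 : Set (ℝ × ℝ)) =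
      {z | 0 < z.1 ∧ z.1 < z.2} ∪ {z | 0 < z.2 ∧ z.2 ≤ z.1} := by
    ext z
    simp only [mem_prod, mem_Ioi, mem_union, mem_ofPred_eq]
    grind
  have triangles_disjoint : Disjoint {z : ℝ × ℝ | 0 < z.1 ∧ z.1 < z.2}
      {z | 0 < z.2 ∧ z.2 ≤ z.1} :=
    disjoint_left.2 fun _ h h' ↦ h.2.not_ge h'.2
  have sum := measurePreserving_min_abs_sub_above_diagonal.add_measure
    measurePreserving_min_abs_sub_below_diagonal
  rwa [← Measure.restrict_union triangles_disjoint (by measurability), ← quadrant_eq,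
    ← two_smul ENNReal] at sum

section

variable {E : Type*} [NormedAddCommGroup E] [NormedSpace ℝ E]

theorem integral_integral_min_smul_abs_sub {𝕜 : Type*} [RCLike 𝕜] [NormedSpace 𝕜 E]
    {f : ℝ → 𝕜} {g : ℝ → E} (hf : IntegrableOn f (Ioi 0)) (hg : IntegrableOn g (Ioi 0)) :
    ∫ u in Ioi (0 : ℝ), ∫ s in Ioi (0 : ℝ), f (min u s) • g |u - s| =
      (2 : ℝ) • (∫ m in Ioi (0 : ℝ), f m) • ∫ d in Ioi (0 : ℝ), g d := by
  have fold := measurePreserving_min_abs_sub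
  have product_integrable : Integrable (fun z : ℝ × ℝ ↦ f z.1 • g z.2)
      ((2 : ENNReal) • volume.restrict (Ioi 0 ×ˢ Ioi 0)) := by
    rw [Measure.volume_eq_prod, ← Measure.prod_restrict]
    exact (hf.smul_prod hg).smul_measure ENNReal.ofNat_ne_top
  calc ∫ u in Ioi (0 : ℝ), ∫ s in Ioi (0 : ℝ), f (min u s) • g |u - s|
      = ∫ z in Ioi (0 : ℝ) ×ˢ Ioi (0 : ℝ), f (min z.1 z.2) • g |z.1 - z.2| :=
        (setIntegral_prod _ (fold.integrable_comp_of_integrable product_integrable)).symm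
    _ = ∫ z, f z.1 • g z.2 ∂((2 : ENNReal) • volume.restrict (Ioi 0 ×ˢ Ioi 0)) := by
        rw [← fold.map_eq, integral_map fold.aemeasurable
          (fold.map_eq ▸ product_integrable.aestronglyMeasurable)]
    _ = (2 : ℝ) • (∫ m in Ioi (0 : ℝ), f m) • ∫ d in Ioi (0 : ℝ), g d := by
        rw [integral_smul_measure, Measure.volume_eq_prod, ← Measure.prod_restrict,
          integral_prod_smul, ENNReal.toReal_ofNat]

theorem integral_integral_exp_neg_mul_add_smul_abs_sub {r : ℝ} (hr : 0 < r) {g : ℝ → E}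
    (hg : IntegrableOn (fun t ↦ exp (-r * t) • g t) (Ioi 0)) :
    ∫ u in Ioi (0 : ℝ), ∫ s in Ioi (0 : ℝ), exp (-r * (s + u)) • g |u - s| =
      r⁻¹ • ∫ t in Ioi (0 : ℝ), exp (-r * t) • g t := by
  have two_min_add_abs_sub (u s : ℝ) : s + u = 2 * min u s + |u - s| := by
    linarith [min_add_max u s, max_sub_min_eq_abs' u s]
  have exp_split (u s : ℝ) :
      exp (-r * (s + u)) = exp (-(2 * r) * min u s) * exp (-r * |u - s|) := by
    rw [← exp_add, two_min_add_abs_sub]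
    ring_nf
  have integral_exp : ∫ m in Ioi (0 : ℝ), exp (-(2 * r) * m) = (2 * r)⁻¹ := by
    rw [integral_exp_mul_Ioi (by linarith), mul_zero, exp_zero, neg_div_neg_eq, one_div]
  simp_rw [exp_split, mul_smul]
  rw [integral_integral_min_smul_abs_sub (exp_neg_integrableOn_Ioi 0 (by positivity)) hg,
    integral_exp, smul_smul, mul_inv, mul_inv_cancel_left₀ two_ne_zero]

end

theorem integral_integral_exp_neg_add_mul_abs_sub_rpow {a : ℝ} (ha : 0 < a) :
    ∫ u in Ioi (0 : ℝ), ∫ s in Ioi (0 : ℝ), exp (-(s + u)) * |u - s| ^ (a - 1) = Gamma a := by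
  have kernel_integrable : IntegrableOn (fun t : ℝ ↦ exp (-1 * t) • t ^ (a - 1)) (Ioi 0) := by
    simpa only [neg_one_mul, smul_eq_mul] using GammaIntegral_convergent ha
  simpa only [neg_one_mul, smul_eq_mul, inv_one, one_mul, ← Gamma_eq_integral ha] using
    integral_integral_exp_neg_mul_add_smul_abs_sub one_pos kernel_integrable

theorem stmt_0_general (H : ℝ) (hH : 1 / 2 < H) :
    (2 * H - 1) * ∫ u in Ioi (0 : ℝ), ∫ s in Ioi (0 : ℝ),
      exp (-(s + u)) * |u - s| ^ (2 * H - 2) = Gamma (2 * H) := by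
  have ha : 0 < 2 * H - 1 := by linarith
  rw [show 2 * H - 2 = 2 * H - 1 - 1 by ring, integral_integral_exp_neg_add_mul_abs_sub_rpow ha,
    ← Gamma_add_one ha.ne', sub_add_cancel]

theorem stmt_0 (H : ℝ) (h1 : 1/2 < H) (h2 : H < 1) :
    (2*H - 1) * ∫ u in Ioi (0:ℝ), ∫ s in Ioi (0:ℝ),
      Real.exp (-(s+u)) * |u - s| ^ (2*H - 2) = Real.Gamma (2*H) :=
  stmt_0_general H h1
end

section
/- For every real number H with 1/2 < H < 1 and every real θ > 0, one has (2H-1) · ∫₀^∞ ∫₀^∞ e^{-θ(s+u)} |u-s|^{2H-2} ds du = θ^{-2H} Γ(2H). (Equivalently, H(2H-1) times the double integral equals θ^{-2H} H Γ(2H), which is the variance of the stationary fractional Ornstein–Uhlenbeck process with σ = 1.) -/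
/-!
Since `s + u = 2 * min s u + |u - s|`, the integrand is `f (min s u) * g |u - s|` with
`f x = exp (-2 θ x)` and `g x = exp (-θ x) x ^ (2 H - 2)`. For fixed `u`, the range `s < u`
contributes the convolution `∫ f s * g (u - s)`, whose integral over `u` is `(∫ f) * ∫ g`, and the
range `s > u` contributes `f u * ∫ g`, which has the same integral. The double integral is thus
`2 * (∫ f) * ∫ g`, where `∫ f = 1 / (2 θ)` and `∫ g = θ ^ (1 - 2 H) Γ(2 H - 1)`.
-/

open MeasureTheory Real Set

section Translation

variable {E : Type*} [NormedAddCommGroup E]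

theorem integrableOn_Ioi_comp_sub_right {g : ℝ → E} {a u : ℝ}
    (hg : IntegrableOn g (Ioi (a - u))) : IntegrableOn (fun s => g (s - u)) (Ioi a) := by
  have hpre : (fun s => s - u) ⁻¹' Ioi (a - u) = Ioi a := by
    rw [preimage_sub_const_Ioi, sub_add_cancel]
  rw [← hpre]
  exact ((measurePreserving_sub_right volume u).integrableOn_comp_preimage
    (MeasurableEquiv.subRight u).measurableEmbedding).2 hg

theorem setIntegral_Ioi_comp_sub_right [NormedSpace ℝ E] (g : ℝ → E) (a u : ℝ) :
    ∫ s in Ioi a, g (s - u) = ∫ x in Ioi (a - u), g x := by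
  have hpre : (fun s => s - u) ⁻¹' Ioi (a - u) = Ioi a := by
    rw [preimage_sub_const_Ioi, sub_add_cancel]
  rw [← hpre]
  exact (measurePreserving_sub_right volume u).setIntegral_preimage_emb
    (MeasurableEquiv.subRight u).measurableEmbedding g _

end Translation

section MinAbsSub

variable {E E' F : Type*}
  [NormedAddCommGroup E] [NormedSpace ℝ E]
  [NormedAddCommGroup E'] [NormedSpace ℝ E']
  [NormedAddCommGroup F] [NormedSpace ℝ F]
variable {f : ℝ → E} {g : ℝ → E'}

theorem ae_intervalIntegrable_posConvolution
    (hf : IntegrableOn f (Ioi 0)) (hg : IntegrableOn g (Ioi 0)) (L : E →L[ℝ] E' →L[ℝ] F) :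
    ∀ᵐ u, 0 ≤ u → IntervalIntegrable (fun s => L (f s) (g (u - s))) volume 0 u := by
  filter_upwards [(hf.integrable_indicator measurableSet_Ioi).ae_convolution_exists L
    (hg.integrable_indicator measurableSet_Ioi)] with u hu h0u
  rw [intervalIntegrable_iff_integrableOn_Ioo_of_le h0u]
  refine (hu.integrableOn (s := Ioo 0 u)).congr_fun (fun s hs => ?_) measurableSet_Ioo
  have hus : u - s ∈ Ioi 0 := sub_pos.2 hs.2
  simp only [indicator_of_mem (mem_Ioi.2 hs.1), indicator_of_mem hus]

theorem setIntegral_Ioi_min_abs_sub [CompleteSpace E'] [CompleteSpace F]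
    (hg : IntegrableOn g (Ioi 0)) (L : E →L[ℝ] E' →L[ℝ] F) {u : ℝ} (hu : 0 ≤ u)
    (hfg : IntervalIntegrable (fun s => L (f s) (g (u - s))) volume 0 u) :
    ∫ s in Ioi 0, L (f (min s u)) (g |u - s|) =
      (∫ s in 0..u, L (f s) (g (u - s))) + L (f u) (∫ x in Ioi 0, g x) := by
  have hbelow : EqOn (fun s => L (f s) (g (u - s)))
      (fun s => L (f (min s u)) (g |u - s|)) (uIcc 0 u) := fun s hs => by
    have hsu : s ≤ u := (uIcc_of_le hu ▸ hs).2
    simp only [min_eq_left hsu, abs_of_nonneg (sub_nonneg.2 hsu)]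
  have habove : EqOn (fun s => L (f u) (g (s - u)))
      (fun s => L (f (min s u)) (g |u - s|)) (Ioi u) := fun s hs => by
    have hus : u ≤ s := (mem_Ioi.1 hs).le
    simp only [min_eq_right hus, abs_sub_comm u s, abs_of_nonneg (sub_nonneg.2 hus)]
  have hg_shift : IntegrableOn (fun s => g (s - u)) (Ioi u) :=
    integrableOn_Ioi_comp_sub_right (by rwa [sub_self])
  have hLg_shift : IntegrableOn (fun s => L (f u) (g (s - u))) (Ioi u) :=
    (L (f u)).integrable_comp hg_shift
  calc ∫ s in Ioi 0, L (f (min s u)) (g |u - s|)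
    _ = (∫ s in 0..u, L (f (min s u)) (g |u - s|)) + ∫ s in Ioi u, L (f (min s u)) (g |u - s|) :=
      (intervalIntegral.integral_interval_add_Ioi' (hfg.congr (hbelow.mono uIoc_subset_uIcc))
        (hLg_shift.congr_fun habove measurableSet_Ioi)).symm
    _ = (∫ s in 0..u, L (f s) (g (u - s))) + ∫ s in Ioi u, L (f u) (g (s - u)) := by
      rw [intervalIntegral.integral_congr hbelow, setIntegral_congr_fun measurableSet_Ioi habove]
    _ = (∫ s in 0..u, L (f s) (g (u - s))) + L (f u) (∫ x in Ioi 0, g x) := by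
      rw [(L (f u)).integral_comp_comm hg_shift, setIntegral_Ioi_comp_sub_right, sub_self]

theorem integral_integral_Ioi_min_abs_sub
    [CompleteSpace E] [CompleteSpace E'] [CompleteSpace F]
    (hf : IntegrableOn f (Ioi 0)) (hg : IntegrableOn g (Ioi 0)) (L : E →L[ℝ] E' →L[ℝ] F) :
    ∫ u in Ioi 0, ∫ s in Ioi 0, L (f (min s u)) (g |u - s|) =
      (2 : ℝ) • L (∫ x in Ioi 0, f x) (∫ x in Ioi 0, g x) := by
  let M := L.flip (∫ x in Ioi 0, g x)
  have hconv : IntegrableOn (fun u => ∫ s in 0..u, L (f s) (g (u - s))) (Ioi 0) :=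
    (integrable_indicator_iff measurableSet_Ioi).1 (integrable_posConvolution hf hg L)
  calc ∫ u in Ioi 0, ∫ s in Ioi 0, L (f (min s u)) (g |u - s|)
    _ = ∫ u in Ioi 0, ((∫ s in 0..u, L (f s) (g (u - s))) + M (f u)) := by
      refine setIntegral_congr_ae measurableSet_Ioi ?_
      filter_upwards [ae_intervalIntegrable_posConvolution hf hg L] with u hu hu_pos
      exact setIntegral_Ioi_min_abs_sub hg L (mem_Ioi.1 hu_pos).le (hu (mem_Ioi.1 hu_pos).le)
    _ = (∫ u in Ioi 0, ∫ s in 0..u, L (f s) (g (u - s))) + ∫ u in Ioi 0, M (f u) :=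
      integral_add hconv (M.integrable_comp hf)
    _ = (2 : ℝ) • L (∫ x in Ioi 0, f x) (∫ x in Ioi 0, g x) := by
      rw [integral_posConvolution hf hg L, M.integral_comp_comm hf, two_smul]
      rfl

end MinAbsSub

theorem exp_neg_mul_add_eq_exp_min_mul_exp_abs_sub (θ s u : ℝ) :
    exp (-θ * (s + u)) = exp (-(2 * θ) * min s u) * exp (-θ * |u - s|) := by
  have hmin : 2 * min s u = s + u - |u - s| := by
    simpa only [nsmul_eq_mul, Nat.cast_ofNat] using two_nsmul_inf_eq_add_sub_abs_sub s u
  rw [← exp_add]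
  congr 1
  linear_combination θ * hmin

theorem integral_integral_exp_neg_mul_add_smul_abs_sub_s1 {E : Type*} [NormedAddCommGroup E]
    [NormedSpace ℝ E] [CompleteSpace E] {θ : ℝ} (hθ : 0 < θ) {k : ℝ → E}
    (hk : IntegrableOn (fun x => exp (-θ * x) • k x) (Ioi 0)) :
    ∫ u in Ioi (0 : ℝ), ∫ s in Ioi (0 : ℝ), exp (-θ * (s + u)) • k |u - s| =
      θ⁻¹ • ∫ x in Ioi 0, exp (-θ * x) • k x := by
  have hneg : -(2 * θ) < 0 := by linarith
  have hexp : ∫ x in Ioi 0, exp (-(2 * θ) * x) = (2 * θ)⁻¹ := by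
    rw [integral_exp_mul_Ioi hneg, mul_zero, exp_zero, neg_div_neg_eq, one_div]
  calc ∫ u in Ioi (0 : ℝ), ∫ s in Ioi (0 : ℝ), exp (-θ * (s + u)) • k |u - s|
    _ = ∫ u in Ioi (0 : ℝ), ∫ s in Ioi (0 : ℝ),
          exp (-(2 * θ) * min s u) • exp (-θ * |u - s|) • k |u - s| := by
      simp only [exp_neg_mul_add_eq_exp_min_mul_exp_abs_sub, mul_smul]
    _ = (2 : ℝ) • (∫ x in Ioi 0, exp (-(2 * θ) * x)) • ∫ x in Ioi 0, exp (-θ * x) • k x :=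
      integral_integral_Ioi_min_abs_sub (integrableOn_exp_mul_Ioi hneg 0) hk
        (ContinuousLinearMap.lsmul ℝ ℝ)
    _ = θ⁻¹ • ∫ x in Ioi 0, exp (-θ * x) • k x := by
      rw [hexp, smul_smul, mul_inv, mul_inv_cancel_left₀ two_ne_zero]

theorem integral_integral_exp_neg_mul_add_mul_abs_sub_rpow {a θ : ℝ} (ha : 0 < a) (hθ : 0 < θ) :
    ∫ u in Ioi (0 : ℝ), ∫ s in Ioi (0 : ℝ), exp (-θ * (s + u)) * |u - s| ^ (a - 1) =
      θ ^ (-(a + 1)) * Gamma a := by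
  have hgamma : ∫ x in Ioi 0, exp (-θ * x) * x ^ (a - 1) = θ ^ (-a) * Gamma a := by
    simpa only [mul_comm (exp _), neg_mul, one_div, inv_rpow hθ.le, rpow_neg hθ.le] using
      integral_rpow_mul_exp_neg_mul_Ioi ha hθ
  have hint : IntegrableOn (fun x => exp (-θ * x) * x ^ (a - 1)) (Ioi 0) := by
    simpa only [rpow_one, mul_comm] using
      integrableOn_rpow_mul_exp_neg_mul_rpow (by linarith : -1 < a - 1) one_pos hθ
  calc ∫ u in Ioi (0 : ℝ), ∫ s in Ioi (0 : ℝ), exp (-θ * (s + u)) * |u - s| ^ (a - 1)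
    _ = θ⁻¹ * ∫ x in Ioi 0, exp (-θ * x) * x ^ (a - 1) :=
      integral_integral_exp_neg_mul_add_smul_abs_sub_s1 hθ (k := fun x => x ^ (a - 1)) hint
    _ = θ ^ (-(a + 1)) * Gamma a := by
      rw [hgamma, ← mul_assoc, ← rpow_neg_one, ← rpow_add hθ, neg_add_rev]

theorem stmt_1_general (H θ : ℝ) (h1 : 1 / 2 < H) (hθ : 0 < θ) :
    (2 * H - 1) * ∫ u in Ioi (0 : ℝ), ∫ s in Ioi (0 : ℝ),
      exp (-θ * (s + u)) * |u - s| ^ (2 * H - 2)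
      = θ ^ (-(2 * H)) * Gamma (2 * H) := by
  have ha : 0 < 2 * H - 1 := by linarith
  have hint := integral_integral_exp_neg_mul_add_mul_abs_sub_rpow ha hθ
  have hGamma := Gamma_add_one ha.ne'
  rw [show 2 * H - 1 - 1 = 2 * H - 2 by ring, sub_add_cancel] at hint
  rw [sub_add_cancel] at hGamma
  rw [hint, hGamma, mul_left_comm]

theorem stmt_1 (H θ : ℝ) (h1 : 1/2 < H) (h2 : H < 1) (hθ : 0 < θ) :
    (2*H - 1) * ∫ u in Ioi (0:ℝ), ∫ s in Ioi (0:ℝ),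
      Real.exp (-θ*(s+u)) * |u - s| ^ (2*H - 2)
      = θ ^ (-(2*H)) * Real.Gamma (2*H) :=
  stmt_1_general H θ h1 hθ
end

section
/- Let 1/2 < H < 3/4 and θ > 0. For T > 0 define I_T = ∫_{[0,T]⁴} e^{-θ|s₂-u₂| - θ|s₁-u₁|} |s₂-s₁|^{2H-2} |u₂-u₁|^{2H-2} du₁ du₂ ds₁ ds₂. Then lim_{T→∞} I_T / T = θ^{1-4H} γ_H, where γ_H = (8H-2) Γ(2H-1)² + (16H-4) Γ(2H-1) Γ(3-4H) Γ(4H-2) / Γ(2-2H). -/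
/-!
By translation invariance along the diagonal, `I_T / T` is an average over the position of one of
the four points, and it converges to the integral over `ℝ³` of the integrand in the relative
positions of the other three. Writing `f x = e^{-θ|x|}` and `g x = |x|^{2H-2}`, the integrand is a
product of differences around the 4-cycle `s₁ u₁ u₂ s₂`, with the kernels `f, g, f, g` on its
consecutive edges, so this integral is the fourfold convolution `f ⋆ g ⋆ f ⋆ g` at `0`. By
commutativity it equals `∫ (f ⋆ f) (g ⋆ g)`, where `(f ⋆ f) w = (|w| + 1/θ) e^{-θ|w|}` and `g ⋆ g`
is a constant multiple of `|w|^{4H-3}`; what remains is a Gamma integral. All convolutions are taken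
in `ℝ≥0∞`, where Tonelli's theorem and associativity need no integrability.
-/

open MeasureTheory Real Set Filter

open ProbabilityTheory (beta beta_pos)
open scoped ENNReal Topology Pointwise

lemma lintegral_eq_abs_mul_lintegral_comp_mul_left {c : ℝ} (hc : c ≠ 0) (φ : ℝ → ℝ≥0∞) :
    ∫⁻ x, φ x = ENNReal.ofReal |c| * ∫⁻ x, φ (c * x) := by
  conv_lhs => rw [← Real.smul_map_volume_mul_left hc]
  rw [lintegral_smul_measure, (measurableEmbedding_mulLeft₀ hc).lintegral_map, smul_eq_mul]

section EulerIntegrals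

variable {α β r : ℝ}

lemma lintegral_rpow_mul_exp_neg_mul_Ioi (hα : 0 < α) (hr : 0 < r) :
    ∫⁻ x in Ioi 0, ENNReal.ofReal (x ^ (α - 1) * exp (-(r * x))) =
      ENNReal.ofReal (r ^ (-α) * Gamma α) := by
  have hval : ∫ x in Ioi 0, x ^ (α - 1) * exp (-(r * x)) = r ^ (-α) * Gamma α := by
    rw [Real.integral_rpow_mul_exp_neg_mul_Ioi hα hr, one_div, inv_rpow hr.le, rpow_neg hr.le]
  have hint : IntegrableOn (fun x ↦ x ^ (α - 1) * exp (-(r * x))) (Ioi 0) :=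
    Integrable.of_integral_ne_zero (hval ▸ (mul_pos (by positivity) (Gamma_pos_of_pos hα)).ne')
  rw [← hval, ofReal_integral_eq_lintegral_ofReal hint]
  exact ae_restrict_of_forall_mem measurableSet_Ioi fun x (hx : 0 < x) ↦ by
    simp only [Pi.zero_apply]; positivity

lemma lintegral_exp_neg_mul_Ioi (hr : 0 < r) :
    ∫⁻ x in Ioi 0, ENNReal.ofReal (exp (-(r * x))) = ENNReal.ofReal r⁻¹ := by
  simpa [rpow_neg_one] using lintegral_rpow_mul_exp_neg_mul_Ioi one_pos hr

lemma lintegral_rpow_mul_one_sub_rpow_Ioo (hα : 0 < α) (hβ : 0 < β) :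
    ∫⁻ x in Ioo 0 1, ENNReal.ofReal (x ^ (α - 1) * (1 - x) ^ (β - 1)) =
      ENNReal.ofReal (beta α β) := by
  have hB := beta_pos hα hβ
  have hpdf := ProbabilityTheory.lintegral_betaPDF_eq_one hα hβ
  simp_rw [ProbabilityTheory.lintegral_betaPDF, mul_assoc,
    ENNReal.ofReal_mul (one_div_pos.2 hB).le] at hpdf
  rw [lintegral_const_mul _ (by fun_prop), one_div, ENNReal.ofReal_inv_of_pos hB] at hpdf
  rw [ENNReal.eq_inv_of_mul_eq_one_left ((mul_comm _ _).trans hpdf), inv_inv]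

-- Multiply by `Γ(α + β)`, write `(1 + x) ^ (-(α + β)) * Γ(α + β)` as a Gamma integral in `s`, and
-- integrate over `x` first.
lemma lintegral_rpow_mul_one_add_rpow_Ioi (hα : 0 < α) (hβ : 0 < β) :
    ∫⁻ x in Ioi 0, ENNReal.ofReal (x ^ (α - 1) * (1 + x) ^ (-(α + β))) =
      ENNReal.ofReal (beta α β) := by
  have hΓ : 0 < Gamma (α + β) := Gamma_pos_of_pos (by positivity)
  have hΓα : 0 < Gamma α := Gamma_pos_of_pos hα
  have hx_int : ∀ x ∈ Ioi (0 : ℝ),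
      ∫⁻ s in Ioi 0, ENNReal.ofReal (x ^ (α - 1) * (s ^ (α + β - 1) * exp (-((1 + x) * s)))) =
        ENNReal.ofReal (x ^ (α - 1) * (1 + x) ^ (-(α + β))) * ENNReal.ofReal (Gamma (α + β)) := by
    intro x (hx : 0 < x)
    simp_rw [ENNReal.ofReal_mul (show 0 ≤ x ^ (α - 1) by positivity)]
    rw [lintegral_const_mul _ (by fun_prop),
      lintegral_rpow_mul_exp_neg_mul_Ioi (by positivity) (by positivity),
      ENNReal.ofReal_mul (by positivity), mul_assoc]
  have hs_int : ∀ s ∈ Ioi (0 : ℝ),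
      ∫⁻ x in Ioi 0, ENNReal.ofReal (x ^ (α - 1) * (s ^ (α + β - 1) * exp (-((1 + x) * s)))) =
        ENNReal.ofReal (s ^ (β - 1) * exp (-(1 * s))) * ENNReal.ofReal (Gamma α) := by
    intro s (hs : 0 < s)
    have hsplit (x : ℝ) : x ^ (α - 1) * (s ^ (α + β - 1) * exp (-((1 + x) * s))) =
        s ^ (α + β - 1) * exp (-(1 * s)) * (x ^ (α - 1) * exp (-(s * x))) := by
      rw [show -((1 + x) * s) = -(1 * s) + -(s * x) by ring, exp_add]; ring
    have hpow : s ^ (β - 1) = s ^ (α + β - 1) * s ^ (-α) := by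
      rw [← rpow_add hs]; ring_nf
    simp_rw [hsplit, ENNReal.ofReal_mul (show 0 ≤ s ^ (α + β - 1) * exp (-(1 * s)) by positivity)]
    rw [lintegral_const_mul _ (by fun_prop), lintegral_rpow_mul_exp_neg_mul_Ioi hα hs,
      ← ENNReal.ofReal_mul (by positivity), ← ENNReal.ofReal_mul (by positivity), hpow]
    ring_nf
  have hswap := lintegral_lintegral_swap (μ := volume.restrict (Ioi (0 : ℝ)))
    (ν := volume.restrict (Ioi (0 : ℝ))) (f := fun x s : ℝ ↦
      ENNReal.ofReal (x ^ (α - 1) * (s ^ (α + β - 1) * exp (-((1 + x) * s)))))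
    (by unfold Function.uncurry; fun_prop)
  rw [setLIntegral_congr_fun measurableSet_Ioi hx_int,
    setLIntegral_congr_fun measurableSet_Ioi hs_int, lintegral_mul_const _ (by fun_prop),
    lintegral_mul_const _ (by fun_prop), lintegral_rpow_mul_exp_neg_mul_Ioi hβ one_pos,
    one_rpow, one_mul, mul_comm (ENNReal.ofReal (Gamma β)), ← ENNReal.ofReal_mul hΓα.le] at hswap
  rw [beta, ENNReal.ofReal_div_of_pos hΓ, ← hswap,
    ENNReal.mul_div_cancel_right (by simpa using hΓ) ENNReal.ofReal_ne_top]

end EulerIntegrals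

section LineSplitting

lemma lintegral_eq_tails_add_setLIntegral_Ioo {a b : ℝ} (hab : a ≤ b) (φ : ℝ → ℝ≥0∞) :
    ∫⁻ x, φ x = (∫⁻ x in Ioi 0, φ (a - x)) + (∫⁻ x in Ioo a b, φ x) +
      ∫⁻ x in Ioi 0, φ (b + x) := by
  have hleft : ∫⁻ x in Ioi 0, φ (a - x) = ∫⁻ x in Iio a, φ x := by
    simp_rw [← lintegral_indicator measurableSet_Ioi, ← lintegral_indicator measurableSet_Iio]
    rw [← lintegral_sub_left_eq_self ((Iio a).indicator φ) a]
    simp [indicator]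
  have hright : ∫⁻ x in Ioi 0, φ (b + x) = ∫⁻ x in Ioi b, φ x := by
    simp_rw [← lintegral_indicator measurableSet_Ioi]
    rw [← lintegral_add_left_eq_self ((Ioi b).indicator φ) b]
    simp [indicator]
  rw [hleft, hright, ← lintegral_add_compl φ measurableSet_Iio, compl_Iio,
    ← Ico_union_Ici_eq_Ici hab,
    lintegral_union measurableSet_Ici ((Iio_disjoint_Ici le_rfl).mono_left Ico_subset_Iio_self),
    setLIntegral_congr Ioo_ae_eq_Ico, setLIntegral_congr Ioi_ae_eq_Ici, add_assoc]

lemma lintegral_comp_abs (φ : ℝ → ℝ≥0∞) : ∫⁻ x, φ |x| = 2 * ∫⁻ x in Ioi 0, φ x := by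
  have htail : ∫⁻ x in Ioi 0, φ |x| = ∫⁻ x in Ioi 0, φ x :=
    setLIntegral_congr_fun measurableSet_Ioi fun x (hx : 0 < x) ↦ by rw [abs_of_pos hx]
  rw [lintegral_eq_tails_add_setLIntegral_Ioo (le_refl 0) fun x ↦ φ |x|]
  simp [htail, two_mul]

lemma lconvolution_apply_eq_dilate (f g : ℝ → ℝ≥0∞) {w : ℝ} (hw : w ≠ 0) :
    (f ⋆ₗ g) w = ENNReal.ofReal |w| * ∫⁻ x, f (w * x) * g (w * (1 - x)) := by
  rw [lconvolution_def, lintegral_eq_abs_mul_lintegral_comp_mul_left hw]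
  ring_nf

end LineSplitting

section Kernels

/-- The exponential covariance kernel `x ↦ e^{-θ|x|}` with rate `θ`, valued in `ℝ≥0∞` so that it can
be convolved with `⋆ₗ` without integrability conditions. -/
noncomputable def expKernel (θ x : ℝ) : ℝ≥0∞ := ENNReal.ofReal (exp (-(θ * |x|)))

/-- The unnormalized Riesz kernel `x ↦ |x| ^ (α - 1)` of order `α` on the line. Its value at `0` is
`0` for `α ≠ 1` rather than `∞`. -/
noncomputable def rieszKernel (α x : ℝ) : ℝ≥0∞ := ENNReal.ofReal (|x| ^ (α - 1))

/-- The constant `C` in `|·| ^ (α - 1) ⋆ |·| ^ (β - 1) = C |·| ^ (α + β - 1)`. Its three terms are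
the contributions of the three intervals into which the two singularities cut the line. -/
noncomputable def rieszConst (α β : ℝ) : ℝ :=
  beta α β + beta α (1 - α - β) + beta β (1 - α - β)

variable {θ α β w : ℝ}

@[fun_prop]
lemma measurable_expKernel (θ : ℝ) : Measurable (expKernel θ) := by
  unfold expKernel; fun_prop

@[fun_prop]
lemma measurable_rieszKernel (α : ℝ) : Measurable (rieszKernel α) := by
  unfold rieszKernel; fun_prop

lemma expKernel_mul_expKernel (θ x y : ℝ) :
    expKernel θ x * expKernel θ y = ENNReal.ofReal (exp (-(θ * (|x| + |y|)))) := by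
  rw [expKernel, expKernel, ← ENNReal.ofReal_mul (exp_pos _).le, ← exp_add]
  ring_nf

lemma rieszKernel_mul (α w x : ℝ) :
    rieszKernel α (w * x) = ENNReal.ofReal (|w| ^ (α - 1)) * rieszKernel α x := by
  rw [rieszKernel, rieszKernel, abs_mul, mul_rpow (abs_nonneg _) (abs_nonneg _),
    ENNReal.ofReal_mul (by positivity)]

lemma rieszConst_pos (hα : 0 < α) (hβ : 0 < β) (hαβ : α + β < 1) : 0 < rieszConst α β := by
  have hγ : 0 < 1 - α - β := by linarith
  have := beta_pos hα hβ
  have := beta_pos hα hγ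
  have := beta_pos hβ hγ
  unfold rieszConst
  positivity

lemma lintegral_rieszKernel_mul_rieszKernel_one_sub (hα : 0 < α) (hβ : 0 < β) (hαβ : α + β < 1) :
    ∫⁻ x, rieszKernel α x * rieszKernel β (1 - x) = ENNReal.ofReal (rieszConst α β) := by
  have hγ : 0 < 1 - α - β := by linarith
  have hmul (x y : ℝ) : rieszKernel α x * rieszKernel β y =
      ENNReal.ofReal (|x| ^ (α - 1) * |y| ^ (β - 1)) :=
    (ENNReal.ofReal_mul (by positivity)).symm
  have hleft : ∫⁻ x in Ioi 0, rieszKernel α (0 - x) * rieszKernel β (1 - (0 - x)) =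
      ENNReal.ofReal (beta α (1 - α - β)) := by
    rw [← lintegral_rpow_mul_one_add_rpow_Ioi hα hγ]
    refine setLIntegral_congr_fun measurableSet_Ioi fun x (hx : 0 < x) ↦ ?_
    simp only [hmul]
    rw [zero_sub, abs_neg, abs_of_pos hx, sub_neg_eq_add, abs_of_pos (by linarith)]
    ring_nf
  have hmid : ∫⁻ x in Ioo 0 1, rieszKernel α x * rieszKernel β (1 - x) =
      ENNReal.ofReal (beta α β) := by
    rw [← lintegral_rpow_mul_one_sub_rpow_Ioo hα hβ]
    refine setLIntegral_congr_fun measurableSet_Ioo fun x hx ↦ ?_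
    simp only [hmul]
    rw [abs_of_pos hx.1, abs_of_pos (sub_pos.2 hx.2)]
  have hright : ∫⁻ x in Ioi 0, rieszKernel α (1 + x) * rieszKernel β (1 - (1 + x)) =
      ENNReal.ofReal (beta β (1 - α - β)) := by
    rw [← lintegral_rpow_mul_one_add_rpow_Ioi hβ hγ]
    refine setLIntegral_congr_fun measurableSet_Ioi fun x (hx : 0 < x) ↦ ?_
    simp only [hmul]
    rw [sub_add_cancel_left, abs_neg, abs_of_pos hx, abs_of_pos (by linarith), mul_comm]
    ring_nf
  rw [lintegral_eq_tails_add_setLIntegral_Ioo zero_le_one, hleft, hmid, hright,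
    ← ENNReal.ofReal_add (beta_pos hα hγ).le (beta_pos hα hβ).le,
    ← ENNReal.ofReal_add (add_pos (beta_pos hα hγ) (beta_pos hα hβ)).le (beta_pos hβ hγ).le,
    rieszConst, add_comm (beta α (1 - α - β))]

theorem lconvolution_rieszKernel (hα : 0 < α) (hβ : 0 < β) (hαβ : α + β < 1) (hw : w ≠ 0) :
    (rieszKernel α ⋆ₗ rieszKernel β) w =
      ENNReal.ofReal (rieszConst α β * |w| ^ (α + β - 1)) := by
  have hw' : 0 < |w| := abs_pos.2 hw
  have hpow : |w| ^ (α + β - 1) = |w| * |w| ^ (α - 1) * |w| ^ (β - 1) := by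
    rw [show α + β - 1 = 1 + (α - 1) + (β - 1) by ring, rpow_add hw', rpow_add hw', rpow_one]
  have hscale (x : ℝ) : rieszKernel α (w * x) * rieszKernel β (w * (1 - x)) =
      ENNReal.ofReal (|w| ^ (α - 1) * |w| ^ (β - 1)) *
        (rieszKernel α x * rieszKernel β (1 - x)) := by
    rw [rieszKernel_mul, rieszKernel_mul, ENNReal.ofReal_mul (by positivity), mul_mul_mul_comm]
  simp_rw [lconvolution_apply_eq_dilate _ _ hw, hscale]
  rw [lintegral_const_mul _ (by fun_prop), lintegral_rieszKernel_mul_rieszKernel_one_sub hα hβ hαβ,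
    ← ENNReal.ofReal_mul (by positivity), ← ENNReal.ofReal_mul (by positivity), hpow]
  ring_nf

lemma lintegral_exp_neg_mul_abs_add_abs_one_sub {c : ℝ} (hc : 0 < c) :
    ∫⁻ x, ENNReal.ofReal (exp (-(c * (|x| + |1 - x|)))) =
      ENNReal.ofReal ((1 + c⁻¹) * exp (-c)) := by
  have htail : ∫⁻ x in Ioi 0, ENNReal.ofReal (exp (-(c * (x + (1 + x))))) =
      ENNReal.ofReal (exp (-c) * (2 * c)⁻¹) := by
    rw [ENNReal.ofReal_mul (by positivity), ← lintegral_exp_neg_mul_Ioi (by positivity),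
      ← lintegral_const_mul _ (by fun_prop)]
    simp_rw [← ENNReal.ofReal_mul (exp_pos _).le, ← exp_add]
    ring_nf
  have hleft : ∫⁻ x in Ioi 0, ENNReal.ofReal (exp (-(c * (|0 - x| + |1 - (0 - x)|)))) =
      ENNReal.ofReal (exp (-c) * (2 * c)⁻¹) := by
    rw [← htail]
    refine setLIntegral_congr_fun measurableSet_Ioi fun x (hx : 0 < x) ↦ ?_
    rw [zero_sub, abs_neg, abs_of_pos hx, sub_neg_eq_add, abs_of_pos (by linarith)]
  have hmid : ∫⁻ x in Ioo 0 1, ENNReal.ofReal (exp (-(c * (|x| + |1 - x|)))) =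
      ENNReal.ofReal (exp (-c)) := by
    have hconst : ∀ x ∈ Ioo (0 : ℝ) 1,
        ENNReal.ofReal (exp (-(c * (|x| + |1 - x|)))) = ENNReal.ofReal (exp (-c)) := fun x hx ↦ by
      rw [abs_of_pos hx.1, abs_of_pos (sub_pos.2 hx.2), add_sub_cancel, mul_one]
    simp [setLIntegral_congr_fun measurableSet_Ioo hconst]
  have hright : ∫⁻ x in Ioi 0, ENNReal.ofReal (exp (-(c * (|1 + x| + |1 - (1 + x)|)))) =
      ENNReal.ofReal (exp (-c) * (2 * c)⁻¹) := by
    rw [← htail]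
    refine setLIntegral_congr_fun measurableSet_Ioi fun x (hx : 0 < x) ↦ ?_
    rw [sub_add_cancel_left, abs_neg, abs_of_pos hx, abs_of_pos (by linarith), add_comm x]
  rw [lintegral_eq_tails_add_setLIntegral_Ioo zero_le_one, hleft, hmid, hright,
    ← ENNReal.ofReal_add (by positivity) (by positivity),
    ← ENNReal.ofReal_add (by positivity) (by positivity)]
  congr 1
  field_simp
  ring

theorem lconvolution_expKernel_self (hθ : 0 < θ) (hw : w ≠ 0) :
    (expKernel θ ⋆ₗ expKernel θ) w = ENNReal.ofReal ((|w| + θ⁻¹) * exp (-(θ * |w|))) := by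
  have : 0 < |w| := abs_pos.2 hw
  simp_rw [lconvolution_apply_eq_dilate _ _ hw, expKernel_mul_expKernel, abs_mul, ← mul_add,
    ← mul_assoc]
  rw [lintegral_exp_neg_mul_abs_add_abs_one_sub (by positivity),
    ← ENNReal.ofReal_mul (by positivity)]
  congr 1
  field_simp

lemma lintegral_abs_add_inv_mul_exp_mul_rpow (hθ : 0 < θ) (hα : 0 < α) :
    ∫⁻ w, ENNReal.ofReal ((|w| + θ⁻¹) * exp (-(θ * |w|)) * |w| ^ (α - 1)) =
      ENNReal.ofReal (2 * (α + 1) * θ ^ (-(α + 1)) * Gamma α) := by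
  have hsplit : ∀ w ∈ Ioi (0 : ℝ),
      ENNReal.ofReal ((w + θ⁻¹) * exp (-(θ * w)) * w ^ (α - 1)) =
        ENNReal.ofReal (w ^ (α + 1 - 1) * exp (-(θ * w))) +
          ENNReal.ofReal θ⁻¹ * ENNReal.ofReal (w ^ (α - 1) * exp (-(θ * w))) := by
    intro w (hw : 0 < w)
    rw [← ENNReal.ofReal_mul (by positivity), ← ENNReal.ofReal_add (by positivity) (by positivity),
      show α + 1 - 1 = α - 1 + 1 by ring, rpow_add_one hw.ne']
    ring_nf
  have : 0 < Gamma α := Gamma_pos_of_pos hα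
  rw [lintegral_comp_abs fun w ↦ ENNReal.ofReal ((w + θ⁻¹) * exp (-(θ * w)) * w ^ (α - 1)),
    setLIntegral_congr_fun measurableSet_Ioi hsplit, lintegral_add_left (by fun_prop),
    lintegral_const_mul _ (by fun_prop), lintegral_rpow_mul_exp_neg_mul_Ioi (by linarith) hθ,
    lintegral_rpow_mul_exp_neg_mul_Ioi hα hθ, ← ENNReal.ofReal_mul (by positivity),
    Gamma_add_one hα.ne', ← ENNReal.ofReal_add (by positivity) (by positivity),
    ← ENNReal.ofReal_ofNat 2, ← ENNReal.ofReal_mul zero_le_two, neg_add,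
    rpow_add hθ, rpow_neg_one]
  ring_nf

lemma rieszConst_self_mul_Gamma (hα : 0 < α) :
    rieszConst α α * Gamma (2 * α) =
      Gamma α ^ 2 + 2 * Gamma α * Gamma (1 - 2 * α) * Gamma (2 * α) / Gamma (1 - α) := by
  have hΓ : Gamma (2 * α) ≠ 0 := (Gamma_pos_of_pos (by positivity)).ne'
  rw [rieszConst, beta, beta, sub_sub, ← two_mul, show α + (1 - 2 * α) = 1 - α by ring, add_mul,
    add_mul, div_mul_cancel₀ _ hΓ]
  ring

theorem lconvolution_expKernel_rieszKernel_zero (hθ : 0 < θ) (hα : 0 < α) (hβ : 0 < β)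
    (hαβ : α + β < 1) :
    ((expKernel θ ⋆ₗ expKernel θ) ⋆ₗ rieszKernel α ⋆ₗ rieszKernel β) 0 =
      ENNReal.ofReal
        (rieszConst α β * (2 * (α + β + 1) * θ ^ (-(α + β + 1)) * Gamma (α + β))) := by
  have hC := (rieszConst_pos hα hβ hαβ).le
  rw [ENNReal.ofReal_mul hC,
    ← lintegral_abs_add_inv_mul_exp_mul_rpow hθ (add_pos hα hβ),
    ← lintegral_const_mul _ (by fun_prop), lconvolution_def]
  refine lintegral_congr_ae ?_
  filter_upwards [Measure.ae_ne volume 0] with w hw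
  rw [lconvolution_expKernel_self hθ hw, add_zero,
    lconvolution_rieszKernel hα hβ hαβ (neg_ne_zero.2 hw), abs_neg,
    ← ENNReal.ofReal_mul (by positivity), ← ENNReal.ofReal_mul hC]
  ring_nf

end Kernels

section DiagonalAverage

lemma setLIntegral_Icc_zero_eq_mul_setLIntegral_Ioo {T : ℝ} (hT : 0 < T) (φ : ℝ → ℝ≥0∞) :
    ∫⁻ t in Icc 0 T, φ t = ENNReal.ofReal T * ∫⁻ u in Ioo 0 1, φ (T * u) := by
  rw [← setLIntegral_congr Ioo_ae_eq_Icc, ← lintegral_indicator measurableSet_Ioo,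
    ← lintegral_indicator measurableSet_Ioo,
    lintegral_eq_abs_mul_lintegral_comp_mul_left hT.ne', abs_of_pos hT]
  congr! 3 with u
  simp [indicator, hT]

lemma setLIntegral_sub_right_eq {G : Type*} [MeasurableSpace G] [AddGroup G] [MeasurableAdd G]
    (μ : Measure G) [μ.IsAddRightInvariant] (f : G → ℝ≥0∞) (s : Set G) (g : G) :
    ∫⁻ x in s, f (x - g) ∂μ = ∫⁻ x in (· + g) ⁻¹' s, f x ∂μ := by
  simpa using ((measurePreserving_add_right μ g).setLIntegral_comp_preimage_emb
    (measurableEmbedding_addRight g) (fun x ↦ f (x - g)) s).symm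

variable {E : Type*} [NormedAddCommGroup E] [NormedSpace ℝ E] [SecondCountableTopology E]
  [MeasurableSpace E] [BorelSpace E] {μ : Measure E} [SFinite μ] {S : Set E} {v : E}

lemma measurableSet_smul_add_smul_mem (hS : MeasurableSet S) (v : E) (c : ℝ) :
    MeasurableSet {p : ℝ × E | c • p.2 + p.1 • v ∈ S} :=
  measurableSet_preimage (by fun_prop : Measurable fun p : ℝ × E ↦ c • p.2 + p.1 • v) hS

lemma aecover_smul_add_smul_mem (μ : Measure E) [SFinite μ] (hS : MeasurableSet S)
    (hv : ∀ u ∈ Ioo (0 : ℝ) 1, u • v ∈ interior S) :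
    AECover ((volume.restrict (Ioo (0 : ℝ) 1)).prod μ) atTop
      fun T : ℝ ↦ {p : ℝ × E | T⁻¹ • p.2 + p.1 • v ∈ S} where
  ae_eventually_mem := by
    have hfst : ∀ᵐ p ∂(volume.restrict (Ioo (0 : ℝ) 1)).prod μ, p.1 ∈ Ioo (0 : ℝ) 1 :=
      Measure.quasiMeasurePreserving_fst.ae (ae_restrict_mem measurableSet_Ioo)
    filter_upwards [hfst] with p hp
    have hlim : Tendsto (fun T : ℝ ↦ T⁻¹ • p.2 + p.1 • v) atTop (𝓝 (p.1 • v)) := by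
      simpa using ((tendsto_inv_atTop_zero (𝕜 := ℝ)).smul_const p.2).add_const (p.1 • v)
    exact hlim (mem_interior_iff_mem_nhds.1 (hv _ hp))
  measurableSet T := measurableSet_smul_add_smul_mem hS v T⁻¹

-- Substitute `t = T u`, and then `x = q + t v` in the inner integral.
lemma setLIntegral_Icc_prod_smul_eq [μ.IsAddRightInvariant] {h : E → ℝ≥0∞} (hh : Measurable h)
    (hS : MeasurableSet S) {T : ℝ} (hT : 0 < T) :
    ∫⁻ p in Icc 0 T ×ˢ (T • S), h (p.2 - p.1 • v) ∂volume.prod μ =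
      ENNReal.ofReal T * ∫⁻ p in {p : ℝ × E | T⁻¹ • p.2 + p.1 • v ∈ S}, h p.2
        ∂(volume.restrict (Ioo 0 1)).prod μ := by
  have hmeas := measurableSet_smul_add_smul_mem hS v T⁻¹
  have hmem (u : ℝ) (q : E) : q + (T * u) • v ∈ T • S ↔ T⁻¹ • q + u • v ∈ S := by
    rw [mem_smul_set_iff_inv_smul_mem₀ hT.ne', smul_add, smul_smul, inv_mul_cancel_left₀ hT.ne']
  rw [setLIntegral_prod _ (by fun_prop), setLIntegral_Icc_zero_eq_mul_setLIntegral_Ioo hT,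
    ← lintegral_indicator hmeas,
    lintegral_prod _ (Measurable.indicator (by fun_prop) hmeas).aemeasurable]
  congr 1
  refine lintegral_congr fun u ↦ ?_
  calc
    _ = ∫⁻ q in T • S, h (q - (T * u) • v) ∂μ := rfl
    _ = ∫⁻ q in {q | T⁻¹ • q + u • v ∈ S}, h q ∂μ := by
      simp only [setLIntegral_sub_right_eq, preimage, hmem]
    _ = _ := (lintegral_indicator (measurable_prodMk_left hmeas) h).symm

theorem tendsto_setLIntegral_Icc_prod_smul_div [μ.IsAddRightInvariant] {h : E → ℝ≥0∞}
    (hh : Measurable h) (hS : MeasurableSet S) (hv : ∀ u ∈ Ioo (0 : ℝ) 1, u • v ∈ interior S) :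
    Tendsto (fun T : ℝ ↦ (∫⁻ p in Icc 0 T ×ˢ (T • S), h (p.2 - p.1 • v) ∂volume.prod μ) /
      ENNReal.ofReal T) atTop (𝓝 (∫⁻ q, h q ∂μ)) := by
  have htotal : ∫⁻ p, (h ∘ Prod.snd) p ∂(volume.restrict (Ioo (0 : ℝ) 1)).prod μ =
      ∫⁻ q, h q ∂μ := by
    rw [lintegral_prod _ (hh.comp measurable_snd).aemeasurable]
    simp
  rw [← htotal]
  refine ((aecover_smul_add_smul_mem μ hS hv).lintegral_tendsto_of_countably_generated
    (hh.comp measurable_snd).aemeasurable).congr' ?_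
  filter_upwards [eventually_gt_atTop 0] with T hT
  rw [setLIntegral_Icc_prod_smul_eq hh hS hT, mul_comm,
    ENNReal.mul_div_cancel_right (by simpa using hT) ENNReal.ofReal_ne_top]
  rfl

end DiagonalAverage

section Cycle

lemma lintegral_mul_sub_eq_lconvolution {G : Type*} [AddCommGroup G] [MeasurableSpace G]
    [MeasurableAdd₂ G] {μ : Measure G} [μ.IsAddLeftInvariant] (f g : G → ℝ≥0∞) (x y : G) :
    ∫⁻ z, f (z - y) * g (x - z) ∂μ = (f ⋆ₗ[μ] g) (x - y) := by
  rw [lconvolution_def, ← lintegral_add_left_eq_self _ y]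
  refine lintegral_congr fun z ↦ ?_
  congr 2 <;> abel

variable {G : Type*} [AddCommGroup G] [MeasurableSpace G] [MeasurableAdd₂ G] [MeasurableNeg G]
  {μ : Measure G} [SFinite μ] [μ.IsAddLeftInvariant] {k₁ k₂ k₃ k₄ : G → ℝ≥0∞}

theorem lintegral_cycle_eq_lconvolution (h₁ : Measurable k₁) (h₂ : Measurable k₂)
    (h₃ : Measurable k₃) (h₄ : Measurable k₄) :
    ∫⁻ q : G × G × G, k₁ q.2.1 * k₂ (q.2.2 - q.2.1) * k₃ (q.1 - q.2.2) * k₄ (-q.1)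
        ∂μ.prod (μ.prod μ) =
      ((k₁ ⋆ₗ[μ] k₂ ⋆ₗ[μ] k₃) ⋆ₗ[μ] k₄) 0 := by
  rw [lintegral_prod _ (by fun_prop), lconvolution_def]
  refine lintegral_congr fun x ↦ ?_
  calc
    _ = ∫⁻ y, k₁ y * (∫⁻ z, k₂ (z - y) * k₃ (x - z) ∂μ) * k₄ (-x) ∂μ := by
      rw [lintegral_prod _ (by fun_prop)]
      refine lintegral_congr fun y ↦ ?_
      rw [← lintegral_const_mul _ (by fun_prop), ← lintegral_mul_const _ (by fun_prop)]
      simp only [mul_assoc]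
    _ = ∫⁻ y, k₁ y * (k₂ ⋆ₗ[μ] k₃) (-y + x) * k₄ (-x) ∂μ := by
      simp only [lintegral_mul_sub_eq_lconvolution, neg_add_eq_sub]
    _ = _ := by
      rw [lintegral_mul_const _ (by fun_prop), ← lconvolution_def, add_zero]

lemma lconvolution_alternating_cycle [μ.IsNegInvariant] {f g h : G → ℝ≥0∞}
    (hf : Measurable f) (hg : Measurable g) (hh : Measurable h) :
    (f ⋆ₗ[μ] g ⋆ₗ[μ] f) ⋆ₗ[μ] h = (f ⋆ₗ[μ] f) ⋆ₗ[μ] g ⋆ₗ[μ] h := by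
  rw [lconvolution_comm (f := g), lconvolution_assoc hf hf hg,
    ← lconvolution_assoc (measurable_lconvolution μ hf hf) hg hh]

end Cycle

theorem tendsto_setLIntegral_cycle_div {k₁ k₂ k₃ k₄ : ℝ → ℝ≥0∞} (h₁ : Measurable k₁)
    (h₂ : Measurable k₂) (h₃ : Measurable k₃) (h₄ : Measurable k₄) :
    Tendsto (fun T : ℝ ↦ (∫⁻ p in Icc 0 T ×ˢ Icc 0 T ×ˢ Icc 0 T ×ˢ Icc 0 T,
        k₁ (p.2.2.1 - p.1) * k₂ (p.2.2.2 - p.2.2.1) * k₃ (p.2.1 - p.2.2.2) * k₄ (p.1 - p.2.1)) /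
      ENNReal.ofReal T) atTop (𝓝 (((k₁ ⋆ₗ k₂ ⋆ₗ k₃) ⋆ₗ k₄) 0)) := by
  have : (volume : Measure (ℝ × ℝ × ℝ)).IsAddRightInvariant := by
    have : (volume : Measure (ℝ × ℝ)).IsAddRightInvariant :=
      Measure.prod.instIsAddRightInvariant
    exact Measure.prod.instIsAddRightInvariant
  let S : Set (ℝ × ℝ × ℝ) := Icc 0 1 ×ˢ Icc 0 1 ×ˢ Icc 0 1
  have hv : ∀ u ∈ Ioo (0 : ℝ) 1, u • (1 : ℝ × ℝ × ℝ) ∈ interior S := fun u hu ↦ by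
    simpa [S, -Icc_prod_Icc, interior_prod_eq] using hu
  rw [← lintegral_cycle_eq_lconvolution h₁ h₂ h₃ h₄]
  refine (tendsto_setLIntegral_Icc_prod_smul_div (μ := volume) (by fun_prop)
    (measurableSet_Icc.prod (measurableSet_Icc.prod measurableSet_Icc)) hv).congr' ?_
  filter_upwards [eventually_gt_atTop 0] with T hT
  have hcube : T • S = Icc 0 T ×ˢ Icc 0 T ×ˢ Icc 0 T := by
    simp [S, -Icc_prod_Icc, smul_set_prod, LinearOrderedField.smul_Icc hT]
  rw [hcube]
  simp only [Measure.volume_eq_prod]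
  simp

section PairIntegral

variable {θ α β : ℝ}

lemma ofReal_exp_mul_rpow_eq_cycle (θ α β s₁ s₂ u₁ u₂ : ℝ) :
    ENNReal.ofReal (exp (-θ * |s₂ - u₂| - θ * |s₁ - u₁|) * |s₂ - s₁| ^ (β - 1) *
        |u₂ - u₁| ^ (α - 1)) =
      expKernel θ (u₁ - s₁) * rieszKernel α (u₂ - u₁) * expKernel θ (s₂ - u₂) *
        rieszKernel β (s₁ - s₂) := by
  have hexp : exp (-θ * |s₂ - u₂| - θ * |s₁ - u₁|) = exp (-(θ * (|u₁ - s₁| + |s₂ - u₂|))) := by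
    rw [abs_sub_comm s₁]
    ring_nf
  rw [ENNReal.ofReal_mul (by positivity), ENNReal.ofReal_mul (exp_pos _).le, hexp,
    ← expKernel_mul_expKernel, abs_sub_comm s₂ s₁, rieszKernel, rieszKernel]
  ring

theorem tendsto_setIntegral_exp_mul_rpow_div (hθ : 0 < θ) (hα : 0 < α) (hβ : 0 < β)
    (hαβ : α + β < 1) :
    Tendsto (fun T : ℝ ↦ (∫ p in Icc 0 T ×ˢ Icc 0 T ×ˢ Icc 0 T ×ˢ Icc 0 T,
        exp (-θ * |p.2.1 - p.2.2.2| - θ * |p.1 - p.2.2.1|) * |p.2.1 - p.1| ^ (β - 1) *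
          |p.2.2.2 - p.2.2.1| ^ (α - 1)) / T) atTop
      (𝓝 (rieszConst α β * (2 * (α + β + 1) * θ ^ (-(α + β + 1)) * Gamma (α + β)))) := by
  have hC := rieszConst_pos hα hβ hαβ
  have : 0 < Gamma (α + β) := Gamma_pos_of_pos (by positivity)
  have hlim := tendsto_setLIntegral_cycle_div (measurable_expKernel θ) (measurable_rieszKernel α)
    (measurable_expKernel θ) (measurable_rieszKernel β)
  rw [lconvolution_alternating_cycle (by fun_prop) (by fun_prop) (by fun_prop),
    lconvolution_expKernel_rieszKernel_zero hθ hα hβ hαβ] at hlim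
  have hreal := (ENNReal.tendsto_toReal ENNReal.ofReal_ne_top).comp hlim
  rw [ENNReal.toReal_ofReal (by positivity)] at hreal
  refine hreal.congr' ?_
  filter_upwards [eventually_gt_atTop 0] with T hT
  rw [integral_eq_lintegral_of_nonneg_ae (ae_of_all _ fun p ↦ by
    simp only [Pi.zero_apply]; positivity) (by fun_prop)]
  simp only [Function.comp_apply, ofReal_exp_mul_rpow_eq_cycle, ENNReal.toReal_div,
    ENNReal.toReal_ofReal hT.le]

end PairIntegral

theorem stmt_2 (H θ : ℝ) (h1 : 1/2 < H) (h2 : H < 3/4) (hθ : 0 < θ) :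
    Tendsto (fun T : ℝ =>
      (∫ p in (Icc (0:ℝ) T) ×ˢ (Icc (0:ℝ) T) ×ˢ (Icc (0:ℝ) T) ×ˢ (Icc (0:ℝ) T),
        Real.exp (-θ * |p.2.1 - p.2.2.2| - θ * |p.1 - p.2.2.1|) *
          |p.2.1 - p.1| ^ (2*H - 2) * |p.2.2.2 - p.2.2.1| ^ (2*H - 2)) / T)
      atTop
      (nhds (θ ^ (1 - 4*H) *
        ((8*H - 2) * Real.Gamma (2*H - 1) ^ 2 +
          (16*H - 4) * Real.Gamma (2*H - 1) * Real.Gamma (3 - 4*H) *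
            Real.Gamma (4*H - 2) / Real.Gamma (2 - 2*H)))) := by
  have hlim := tendsto_setIntegral_exp_mul_rpow_div (α := 2 * H - 1) (β := 2 * H - 1) hθ
    (by linarith) (by linarith) (by linarith)
  have hconst := rieszConst_self_mul_Gamma (α := 2 * H - 1) (by linarith)
  simp only [show 2 * H - 1 - 1 = 2 * H - 2 by ring,
    show 2 * H - 1 + (2 * H - 1) = 4 * H - 2 by ring,
    show -(4 * H - 2 + 1) = 1 - 4 * H by ring] at hlim
  rw [show 2 * (2 * H - 1) = 4 * H - 2 by ring, show 1 - (4 * H - 2) = 3 - 4 * H by ring,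
    show 1 - (2 * H - 1) = 2 - 2 * H by ring] at hconst
  convert hlim using 2
  linear_combination -(2 * (4 * H - 1) * θ ^ (1 - 4 * H)) * hconst
end

section
/- Let 1/2 < H < 3/4 and θ > 0. Then the function (x₁,x₂,x₃) ↦ e^{-θx₁ - θ|x₂-x₃|} x₃^{2H-2} |x₁-x₂|^{2H-2} is Lebesgue integrable on [0,∞)³, i.e. ∫_{[0,∞)³} e^{-θx₁ - θ|x₂-x₃|} x₃^{2H-2} |x₁-x₂|^{2H-2} dx₁ dx₂ dx₃ < ∞. -/
open MeasureTheory Real Set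

/-!
Write the integrand as `f x * k (y - z) * (g z * h (x - y))` with `f`, `k` exponentials and `g`, `h`
powers of the norm. The powers are not integrable, but their large values are integrable and their
small values lie in conjugate Lebesgue spaces. By Young's inequality `g z * h (x - y)` is then
dominated by `G z + H (x - y) + G z * H (x - y)` with `G` and `H` integrable. In the first two terms
the factor `k (y - z)` is kept, in the third it is bounded by a constant; each time this leaves
integrable functions of three independent linear forms in `x`, `y`, `z`.
-/

section MinRpow

/-- The function `s ↦ min s (s ^ p)` which, for `1 ≤ p`, agrees with `s ^ p` on `[0, 1]` and with
`s` on `[1, ∞)`. For measurable `g`, integrability of `x ↦ minRpow p |g x|` expresses that `g` lies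
in `L¹ + Lᵖ`. -/
noncomputable def minRpow (p s : ℝ) : ℝ := min s (s ^ p)

variable {p q s t : ℝ}

lemma minRpow_nonneg (hs : 0 ≤ s) : 0 ≤ minRpow p s := le_min hs (rpow_nonneg hs p)

lemma minRpow_of_le_one (hp : 1 ≤ p) (hs : 0 ≤ s) (hs1 : s ≤ 1) : minRpow p s = s ^ p :=
  min_eq_right (rpow_le_self_of_le_one hs hs1 hp)

lemma minRpow_of_one_le (hp : 1 ≤ p) (hs : 1 ≤ s) : minRpow p s = s :=
  min_eq_left (self_le_rpow_of_one_le hs hp)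

lemma minRpow_rpow (hs : 0 ≤ s) (p a : ℝ) : minRpow p (s ^ a) = min (s ^ a) (s ^ (a * p)) := by
  rw [minRpow, rpow_mul hs]

lemma mul_le_minRpow_add_minRpow_add_mul (hpq : p.HolderConjugate q) (hs : 0 ≤ s) (ht : 0 ≤ t) :
    s * t ≤ minRpow p s + minRpow q t + minRpow p s * minRpow q t := by
  have hp : 1 ≤ p := hpq.lt.le
  have hq : 1 ≤ q := hpq.symm.lt.le
  have hms : 0 ≤ minRpow p s := minRpow_nonneg hs
  have hmt : 0 ≤ minRpow q t := minRpow_nonneg ht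
  have hmul : 0 ≤ minRpow p s * minRpow q t := mul_nonneg hms hmt
  rcases le_total s 1 with hs1 | hs1 <;> rcases le_total t 1 with ht1 | ht1
  · have young : s * t ≤ s ^ p + t ^ q :=
      (young_inequality_of_nonneg hs ht hpq).trans <|
        add_le_add (div_le_self (rpow_nonneg hs p) hp) (div_le_self (rpow_nonneg ht q) hq)
    rw [← minRpow_of_le_one hp hs hs1, ← minRpow_of_le_one hq ht ht1] at young
    linarith
  · have : s * t ≤ minRpow q t := by
      rw [minRpow_of_one_le hq ht1]
      exact mul_le_of_le_one_left ht hs1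
    linarith
  · have : s * t ≤ minRpow p s := by
      rw [minRpow_of_one_le hp hs1]
      exact mul_le_of_le_one_right hs ht1
    linarith
  · have : s * t = minRpow p s * minRpow q t := by
      rw [minRpow_of_one_le hp hs1, minRpow_of_one_le hq ht1]
    linarith

end MinRpow

lemma exists_holderConjugate_mul_lt {a b d : ℝ} (ha : -d < a) (hb : -d < b) (hab : a + b < -d) :
    ∃ p q : ℝ, p.HolderConjugate q ∧ a * p < -d ∧ b * q < -d := by
  have hp : 0 < d + b - a := by linarith
  have hq : 0 < d + a - b := by linarith
  refine ⟨2 * d / (d + b - a), 2 * d / (d + a - b), holderConjugate_iff.2 ⟨?_, ?_⟩, ?_, ?_⟩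
  · rw [one_lt_div hp]
    linarith
  · rw [inv_div, inv_div, ← add_div, div_eq_one_iff_eq (by linarith)]
    ring
  · rw [mul_div_assoc', div_lt_iff₀ hp]
    nlinarith
  · rw [mul_div_assoc', div_lt_iff₀ hq]
    nlinarith

section Group

variable {G : Type*} [AddCommGroup G] [MeasurableSpace G] [MeasurableAdd₂ G] [MeasurableNeg G]
  (μ : Measure G) [SFinite μ] [μ.IsAddLeftInvariant] [μ.IsNegInvariant]

lemma measurePreserving_fst_sub (ν : Measure G) [SFinite ν] :
    MeasurePreserving (fun v : G × G => (v.1, v.1 - v.2)) (ν.prod μ) (ν.prod μ) :=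
  (MeasurePreserving.id ν).skew_product (g := fun x y => x - y) measurable_sub
    (.of_forall fun x => (μ.measurePreserving_sub_left x).map_eq)

lemma measurePreserving_fst_sub_snd {α : Type*} [MeasurableSpace α] (ν : Measure G) [SFinite ν]
    (ρ : Measure α) [SFinite ρ] :
    MeasurePreserving (fun v : G × G × α => (v.1, v.1 - v.2.1, v.2.2))
      (ν.prod (μ.prod ρ)) (ν.prod (μ.prod ρ)) :=
  (measurePreserving_prodAssoc ν μ ρ).comp <|
    ((measurePreserving_fst_sub μ ν).prod (.id ρ)).comp <|
      (measurePreserving_prodAssoc ν μ ρ).symm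

variable {μ} {f k g h : G → ℝ} {C p q : ℝ}

lemma integrable_mul_comp_sub_mul_mul_comp_sub (hpq : p.HolderConjugate q)
    (hf : Integrable f μ) (hk : Integrable k μ) (hkC : ∀ x, |k x| ≤ C)
    (hg : AEStronglyMeasurable g μ) (hgp : Integrable (fun x => minRpow p |g x|) μ)
    (hh : AEStronglyMeasurable h μ) (hhq : Integrable (fun x => minRpow q |h x|) μ) :
    Integrable (fun v : G × G × G => f v.1 * k (v.2.1 - v.2.2) * (g v.2.2 * h (v.1 - v.2.1)))
      (μ.prod (μ.prod μ)) := by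
  have mp_sub_snd := (MeasurePreserving.id μ).prod (measurePreserving_sub_prod μ μ)
  have mp_fst_sub := measurePreserving_fst_sub_snd μ μ μ
  have mp_sub_sub := mp_fst_sub.comp ((MeasurePreserving.id μ).prod (measurePreserving_fst_sub μ μ))
  have int_fkg := mp_sub_snd.integrable_comp_of_integrable (hf.abs.mul_prod (hk.abs.mul_prod hgp))
  have int_fhk := mp_sub_sub.integrable_comp_of_integrable (hf.abs.mul_prod (hhq.mul_prod hk.abs))
  have int_fhg := mp_fst_sub.integrable_comp_of_integrable (hf.abs.mul_prod (hhq.mul_prod hgp))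
  have meas_k := hk.1.comp_fst.comp_snd.comp_measurePreserving mp_sub_snd
  have meas_h := hh.comp_fst.comp_snd.comp_measurePreserving mp_fst_sub
  refine ((int_fkg.add int_fhk).add (int_fhg.const_mul C)).mono'
    ((hf.1.comp_fst.mul meas_k).mul (hg.comp_snd.comp_snd.mul meas_h)) (.of_forall ?_)
  rintro ⟨x, y, z⟩
  simp only [Pi.add_apply, Function.comp_apply, Prod.map_apply, id_eq, norm_mul, norm_eq_abs]
  set P := minRpow p |g z|
  set Q := minRpow q |h (x - y)|
  have hPQ : 0 ≤ P * Q := mul_nonneg (minRpow_nonneg (abs_nonneg _)) (minRpow_nonneg (abs_nonneg _))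
  calc |f x| * |k (y - z)| * (|g z| * |h (x - y)|)
      ≤ |f x| * |k (y - z)| * (P + Q + P * Q) := by
        gcongr
        exact mul_le_minRpow_add_minRpow_add_mul hpq (abs_nonneg _) (abs_nonneg _)
    _ = |f x| * |k (y - z)| * (P + Q) + |f x| * |k (y - z)| * (P * Q) := by ring
    _ ≤ |f x| * |k (y - z)| * (P + Q) + |f x| * C * (P * Q) := by
        gcongr
        exact hkC _
    _ = |f x| * (|k (y - z)| * P) + |f x| * (Q * |k (y - z)|) + C * (|f x| * (Q * P)) := by ring

end Group

section Norm

open Module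

variable {E : Type*} [NormedAddCommGroup E] [NormedSpace ℝ E] [FiniteDimensional ℝ E]
  [Nontrivial E] [MeasurableSpace E] [BorelSpace E] (μ : Measure E) [μ.IsAddHaarMeasure]
  {θ κ a b : ℝ}

lemma integrable_exp_neg_mul_norm (hθ : 0 < θ) : Integrable (fun x : E => exp (-θ * ‖x‖)) μ := by
  refine (integrable_fun_norm_addHaar μ (f := fun r => exp (-θ * r))).2 ?_
  have hdim : (-1 : ℝ) < (finrank ℝ E - 1 : ℕ) := by
    linarith [(finrank ℝ E - 1).cast_nonneg (α := ℝ)]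
  simpa only [rpow_natCast, rpow_one, smul_eq_mul] using
    integrableOn_rpow_mul_exp_neg_mul_rpow hdim one_pos hθ

lemma integrable_min_norm_rpow (ha : -finrank ℝ E < a) (hb : b < -finrank ℝ E) :
    Integrable (fun x : E => min (‖x‖ ^ a) (‖x‖ ^ b)) μ := by
  refine (integrable_fun_norm_addHaar μ (f := fun r => min (r ^ a) (r ^ b))).2 ?_
  have hdim : ((finrank ℝ E - 1 : ℕ) : ℝ) = finrank ℝ E - 1 := Nat.cast_pred finrank_pos
  have radial {r : ℝ} (hr : 0 < r) (c : ℝ) :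
      r ^ (finrank ℝ E - 1 + c) = r ^ (finrank ℝ E - 1) * r ^ c := by
    rw [rpow_add hr, ← hdim, rpow_natCast]
  rw [← Ioc_union_Ioi_eq_Ioi zero_le_one]
  refine IntegrableOn.union ?_ ?_
  · have near_zero : IntegrableOn (fun r : ℝ => r ^ (finrank ℝ E - 1 + a)) (Ioc 0 1) :=
      (intervalIntegrable_iff_integrableOn_Ioc_of_le zero_le_one).1 <|
        intervalIntegral.intervalIntegrable_rpow' (by linarith)
    refine near_zero.congr_fun (fun r hr => ?_) measurableSet_Ioc
    have : r ^ a ≤ r ^ b := rpow_le_rpow_of_exponent_ge hr.1 hr.2 (by linarith)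
    simp only [radial hr.1, min_eq_left this, smul_eq_mul]
  · have near_infty : IntegrableOn (fun r : ℝ => r ^ (finrank ℝ E - 1 + b)) (Ioi 1) :=
      integrableOn_Ioi_rpow_of_lt (by linarith) one_pos
    refine near_infty.congr_fun (fun r (hr : 1 < r) => ?_) measurableSet_Ioi
    have : r ^ b ≤ r ^ a := rpow_le_rpow_of_exponent_le hr.le (by linarith)
    simp only [radial (one_pos.trans hr), min_eq_right this, smul_eq_mul]

lemma integrable_minRpow_norm_rpow {p : ℝ} (ha : -finrank ℝ E < a) (hap : a * p < -finrank ℝ E) :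
    Integrable (fun x : E => minRpow p |‖x‖ ^ a|) μ := by
  simpa only [abs_rpow_of_nonneg (norm_nonneg _), abs_norm, minRpow_rpow (norm_nonneg _)] using
    integrable_min_norm_rpow μ ha hap

theorem stmt_3_general (hθ : 0 < θ) (hκ : 0 < κ) (ha : -finrank ℝ E < a) (hb : -finrank ℝ E < b)
    (hab : a + b < -finrank ℝ E) :
    Integrable (fun v : E × E × E =>
      exp (-θ * ‖v.1‖ - κ * ‖v.2.1 - v.2.2‖) * ‖v.2.2‖ ^ a * ‖v.1 - v.2.1‖ ^ b)
      (μ.prod (μ.prod μ)) := by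
  obtain ⟨p, q, hpq, hap, hbq⟩ := exists_holderConjugate_mul_lt ha hb hab
  have exp_le_one (x : E) : |exp (-κ * ‖x‖)| ≤ 1 := by
    rw [abs_exp, exp_le_one_iff]
    exact mul_nonpos_of_nonpos_of_nonneg (neg_nonpos.2 hκ.le) (norm_nonneg x)
  have meas (c : ℝ) : AEStronglyMeasurable (fun x : E => ‖x‖ ^ c) μ :=
    (measurable_norm.pow_const c).aestronglyMeasurable
  convert integrable_mul_comp_sub_mul_mul_comp_sub hpq (integrable_exp_neg_mul_norm μ hθ)
    (integrable_exp_neg_mul_norm μ hκ) exp_le_one (meas a) (integrable_minRpow_norm_rpow μ ha hap)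
    (meas b) (integrable_minRpow_norm_rpow μ hb hbq) using 2 with v
  rw [← exp_add, ← mul_assoc, neg_mul κ, ← sub_eq_add_neg]

end Norm

theorem stmt_3 (H θ : ℝ) (h1 : 1/2 < H) (h2 : H < 3/4) (hθ : 0 < θ) :
    IntegrableOn (fun p : ℝ × ℝ × ℝ =>
      Real.exp (-θ * p.1 - θ * |p.2.1 - p.2.2|) *
        p.2.2 ^ (2*H - 2) * |p.1 - p.2.1| ^ (2*H - 2))
      ((Ici (0:ℝ)) ×ˢ (Ici (0:ℝ)) ×ˢ (Ici (0:ℝ))) := by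
  have ha : -(Module.finrank ℝ ℝ : ℝ) < 2 * H - 2 := by
    rw [Module.finrank_self, Nat.cast_one]
    linarith
  have hab : 2 * H - 2 + (2 * H - 2) < -(Module.finrank ℝ ℝ : ℝ) := by
    rw [Module.finrank_self, Nat.cast_one]
    linarith
  refine (stmt_3_general volume hθ hθ ha ha hab).integrableOn.congr_fun ?_
    (measurableSet_Ici.prod (measurableSet_Ici.prod measurableSet_Ici))
  rintro ⟨x, y, z⟩ ⟨hx, -, hz⟩
  simp only [norm_eq_abs, abs_of_nonneg (mem_Ici.1 hx), abs_of_nonneg (mem_Ici.1 hz)]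
end

section
/- Let 1/2 < H < 3/4. Then ∫₀^∞ ∫₀^∞ (1+x) e^{-x} (w+x)^{2H-2} w^{2H-2} dw dx = (4H-1) Γ(2H-1) Γ(3-4H) Γ(4H-2) / Γ(2-2H). -/
open MeasureTheory Real Set

/-! Substituting `w = x * v`, the inner integral is `x ^ (4 * H - 3)` times its value at `x = 1`,
which `v = u / (1 - u)` identifies with the beta function at `(2 * H - 1, 3 - 4 * H)`. The remaining
integral in `x` is `Γ s + Γ (s + 1) = (1 + s) * Γ s` at `s = 4 * H - 2`. -/

open ProbabilityTheory (beta beta_eq_betaIntegralReal)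

lemma image_div_one_sub_Ioo {𝕜 : Type*} [Field 𝕜] [LinearOrder 𝕜] [IsStrictOrderedRing 𝕜] :
    (fun u : 𝕜 ↦ u / (1 - u)) '' Ioo 0 1 = Ioi 0 := by
  refine Subset.antisymm ?_ fun t (ht : 0 < t) ↦ ⟨t / (1 + t), ⟨by positivity, ?_⟩, ?_⟩
  · rintro _ ⟨u, hu, rfl⟩
    exact div_pos hu.1 (sub_pos.2 hu.2)
  · rw [div_lt_one (by positivity)]
    exact lt_one_add t
  · have : 1 + t ≠ 0 := by positivity
    field_simp
    simp only [add_sub_cancel_right]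

lemma injOn_div_one_sub {K : Type*} [Field K] : InjOn (fun u : K ↦ u / (1 - u)) {1}ᶜ := by
  intro a ha b hb hab
  rw [div_eq_div_iff (sub_ne_zero.2 (Ne.symm ha)) (sub_ne_zero.2 (Ne.symm hb))] at hab
  linear_combination hab

lemma hasDerivAt_div_one_sub {𝕜 : Type*} [NontriviallyNormedField 𝕜] {u : 𝕜} (hu : u ≠ 1) :
    HasDerivAt (fun u : 𝕜 ↦ u / (1 - u)) ((1 - u) ^ 2)⁻¹ u := by
  refine ((hasDerivAt_id u).div ((hasDerivAt_id u).const_sub 1)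
    (sub_ne_zero.2 hu.symm)).congr_deriv ?_
  simp

lemma integral_Ioi_eq_integral_Ioo_comp_div_one_sub {E : Type*} [NormedAddCommGroup E]
    [NormedSpace ℝ E] (f : ℝ → E) :
    ∫ t in Ioi 0, f t = ∫ u in Ioo 0 1, ((1 - u) ^ 2)⁻¹ • f (u / (1 - u)) := by
  have hne : ∀ u ∈ Ioo (0 : ℝ) 1, u ≠ 1 := fun u hu ↦ hu.2.ne
  rw [← image_div_one_sub_Ioo, integral_image_eq_integral_abs_deriv_smul measurableSet_Ioo
    (fun u hu ↦ (hasDerivAt_div_one_sub (hne u hu)).hasDerivWithinAt) (injOn_div_one_sub.mono hne)]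
  simp only [abs_inv, abs_sq]

lemma integral_Ioo_rpow_mul_one_sub_rpow {a b : ℝ} (ha : 0 < a) (hb : 0 < b) :
    ∫ u in Ioo 0 1, u ^ (a - 1) * (1 - u) ^ (b - 1) = beta a b := by
  have ofReal_integrand : ∀ u ∈ Ioo (0 : ℝ) 1,
      (u : ℂ) ^ ((a : ℂ) - 1) * (1 - (u : ℂ)) ^ ((b : ℂ) - 1) =
        ((u ^ (a - 1) * (1 - u) ^ (b - 1) : ℝ) : ℂ) := fun u hu ↦ by
    push_cast [Complex.ofReal_cpow hu.1.le, Complex.ofReal_cpow (sub_nonneg.2 hu.2.le)]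
    rfl
  rw [beta_eq_betaIntegralReal a b ha hb, Complex.betaIntegral,
    intervalIntegral.integral_of_le zero_le_one, integral_Ioc_eq_integral_Ioo,
    setIntegral_congr_fun measurableSet_Ioo ofReal_integrand, integral_complex_ofReal,
    Complex.ofReal_re]

lemma integral_Ioi_add_one_rpow_mul_rpow {a b : ℝ} (ha : 0 < a) (hb : 0 < b) :
    ∫ t in Ioi 0, (t + 1) ^ (-(a + b)) * t ^ (a - 1) = beta a b := by
  rw [integral_Ioi_eq_integral_Ioo_comp_div_one_sub, ← integral_Ioo_rpow_mul_one_sub_rpow ha hb]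
  refine setIntegral_congr_fun measurableSet_Ioo fun u hu ↦ ?_
  have hu' : 0 < 1 - u := sub_pos.2 hu.2
  have div_add_one : u / (1 - u) + 1 = (1 - u)⁻¹ := by
    field_simp
    ring
  have exponent : b - 1 = a + b - (a - 1) - (2 : ℕ) := by
    push_cast
    ring
  simp only [smul_eq_mul]
  rw [div_add_one, inv_rpow hu'.le, rpow_neg hu'.le, inv_inv, div_rpow hu.1.le hu'.le, exponent,
    rpow_sub_natCast hu'.ne', rpow_sub hu' (a + b)]
  ring

lemma integral_Ioi_add_rpow_mul_rpow_eq_mul (p q : ℝ) {x : ℝ} (hx : 0 < x) :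
    ∫ w in Ioi 0, (w + x) ^ p * w ^ q =
      x ^ (p + q + 1) * ∫ v in Ioi 0, (v + 1) ^ p * v ^ q := by
  have homogeneous : ∀ v ∈ Ioi (0 : ℝ),
      (x * v + x) ^ p * (x * v) ^ q = x ^ (p + q) * ((v + 1) ^ p * v ^ q) := by
    intro v (hv : 0 < v)
    rw [← mul_add_one, mul_rpow hx.le (by positivity), mul_rpow hx.le hv.le, rpow_add hx]
    ring
  calc ∫ w in Ioi 0, (w + x) ^ p * w ^ q
      = x * ∫ v in Ioi 0, (x * v + x) ^ p * (x * v) ^ q := by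
        simpa only [mul_zero, smul_eq_mul] using
          (integral_comp_mul_left_Ioi' (fun w ↦ (w + x) ^ p * w ^ q) 0 hx).symm
    _ = x ^ (p + q + 1) * ∫ v in Ioi 0, (v + 1) ^ p * v ^ q := by
        rw [setIntegral_congr_fun measurableSet_Ioi homogeneous, integral_const_mul,
          rpow_add_one hx.ne']
        ring

lemma integral_Ioi_add_rpow_mul_rpow {a b x : ℝ} (ha : 0 < a) (hb : 0 < b) (hx : 0 < x) :
    ∫ w in Ioi 0, (w + x) ^ (-(a + b)) * w ^ (a - 1) = x ^ (-b) * beta a b := by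
  rw [integral_Ioi_add_rpow_mul_rpow_eq_mul _ _ hx, integral_Ioi_add_one_rpow_mul_rpow ha hb,
    show -(a + b) + (a - 1) + 1 = -b by ring]

lemma integral_Ioi_integral_Ioi_mul_add_rpow_mul_rpow (f : ℝ → ℝ) {a b : ℝ} (ha : 0 < a)
    (hb : 0 < b) :
    ∫ x in Ioi 0, ∫ w in Ioi 0, f x * (w + x) ^ (-(a + b)) * w ^ (a - 1) =
      (∫ x in Ioi 0, f x * x ^ (-b)) * beta a b := by
  rw [← integral_mul_const]
  refine setIntegral_congr_fun measurableSet_Ioi fun x hx ↦ ?_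
  simp only [mul_assoc]
  rw [integral_const_mul, integral_Ioi_add_rpow_mul_rpow ha hb hx]

lemma integral_Ioi_one_add_mul_exp_neg_mul_rpow {s : ℝ} (hs : 0 < s) :
    ∫ x in Ioi 0, (1 + x) * exp (-x) * x ^ (s - 1) = (1 + s) * Gamma s := by
  have split : ∀ x ∈ Ioi (0 : ℝ), (1 + x) * exp (-x) * x ^ (s - 1) =
      exp (-x) * x ^ (s - 1) + exp (-x) * x ^ (s + 1 - 1) := by
    intro x (hx : 0 < x)
    rw [add_sub_right_comm, rpow_add_one hx.ne']
    ring
  rw [setIntegral_congr_fun measurableSet_Ioi split, integral_add (GammaIntegral_convergent hs)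
    (GammaIntegral_convergent (by positivity)), ← Gamma_eq_integral hs,
    ← Gamma_eq_integral (by positivity), Gamma_add_one hs.ne']
  ring

theorem stmt_6 (H : ℝ) (h1 : 1/2 < H) (h2 : H < 3/4) :
    (∫ x in Ioi (0:ℝ), ∫ w in Ioi (0:ℝ),
      (1 + x) * Real.exp (-x) * (w + x) ^ (2*H - 2) * w ^ (2*H - 2))
      = (4*H - 1) * Real.Gamma (2*H - 1) * Real.Gamma (3 - 4*H) *
          Real.Gamma (4*H - 2) / Real.Gamma (2 - 2*H) := by
  have double_integral := integral_Ioi_integral_Ioi_mul_add_rpow_mul_rpow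
    (fun x ↦ (1 + x) * exp (-x)) (a := 2 * H - 1) (b := 3 - 4 * H) (by linarith) (by linarith)
  have gamma_integral := integral_Ioi_one_add_mul_exp_neg_mul_rpow (s := 4 * H - 2) (by linarith)
  rw [show -(2 * H - 1 + (3 - 4 * H)) = 2 * H - 2 by ring, show 2 * H - 1 - 1 = 2 * H - 2 by ring,
    show -(3 - 4 * H) = 4 * H - 2 - 1 by ring, gamma_integral, beta,
    show 2 * H - 1 + (3 - 4 * H) = 2 - 2 * H by ring] at double_integral
  rw [double_integral]
  ring
end

section
/- Let 1/2 < H < 1 and θ > 0. There exists a constant C = C_{θ,H} > 0 such that for all real numbers s, t, T with 0 ≤ s < t ≤ T, one has H(2H-1) ∫_t^T ∫_s^T e^{-θ(ξ-s)} e^{-θ(η-t)} |ξ-η|^{2H-2} dξ dη ≤ C (t-s)^{2H-2}. -/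
open MeasureTheory Real Set

/-! After translation the inner integral is `∫ f(x) |x - r| ^ p dx` over `x > 0`, with `r = η - s`
and `f` an antitone weight. Away from the singularity, where `|x - r| ≥ r / 2`, the kernel is at
most `(r / 2) ^ p`. Within `r / 2` of it the weight is at most `f (r / 2)`, the kernel has
integral `2 / (p + 1) * (r / 2) ^ (p + 1)`, and the extra factor `r / 2` is absorbed by
`(r / 2) * f (r / 2) ≤ ∫ f`. Both parts are thus `O(r ^ p)`, and `r ^ p ≤ (t - s) ^ p` as
`η ≥ t` and `p ≤ 0`. -/

section SingularKernel

variable {p : ℝ}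

lemma intervalIntegrable_abs_rpow (hp : -1 < p) (a b : ℝ) :
    IntervalIntegrable (fun x : ℝ => |x| ^ p) volume a b := by
  refine intervalIntegrable_of_even (f := fun x => |x| ^ p) (fun x => by rw [abs_neg])
    fun c hc => ?_
  refine (intervalIntegral.intervalIntegrable_rpow' hp).congr fun x hx => ?_
  rw [uIoc_of_le hc.le] at hx
  simp only [abs_of_pos hx.1]

lemma integral_abs_rpow_symm (hp : -1 < p) {c : ℝ} (hc : 0 ≤ c) :
    ∫ x in -c..c, |x| ^ p = 2 / (p + 1) * c ^ (p + 1) := by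
  have right_half : ∫ x in (0 : ℝ)..c, |x| ^ p = c ^ (p + 1) / (p + 1) := by
    rw [intervalIntegral.integral_congr (g := fun x => x ^ p), integral_rpow (Or.inl hp),
      zero_rpow (by linarith), sub_zero]
    intro x hx
    rw [uIcc_of_le hc] at hx
    simp only [abs_of_nonneg hx.1]
  have left_half : ∫ x in -c..0, |x| ^ p = ∫ x in (0 : ℝ)..c, |x| ^ p := by
    simpa using (intervalIntegral.integral_comp_neg (a := 0) (b := c) fun x => |x| ^ p).symm
  rw [← intervalIntegral.integral_add_adjacent_intervals (intervalIntegrable_abs_rpow hp _ 0)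
    (intervalIntegrable_abs_rpow hp 0 _), left_half, right_half]
  ring

lemma integrableOn_closedBall_abs_sub_rpow (hp : -1 < p) (r c : ℝ) :
    IntegrableOn (fun x => |x - r| ^ p) (Metric.closedBall r c) := by
  rw [Real.closedBall_eq_Icc]
  rcases lt_or_ge (r + c) (r - c) with h | h
  · simp [Icc_eq_empty_of_lt h]
  · rw [← intervalIntegrable_iff_integrableOn_Icc_of_le h]
    simpa [neg_add_eq_sub, add_comm c r] using
      (intervalIntegrable_abs_rpow hp (-c) c).comp_sub_right r

lemma setIntegral_closedBall_abs_sub_rpow (hp : -1 < p) (r : ℝ) {c : ℝ} (hc : 0 ≤ c) :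
    ∫ x in Metric.closedBall r c, |x - r| ^ p = 2 / (p + 1) * c ^ (p + 1) := by
  rw [Real.closedBall_eq_Icc, integral_Icc_eq_integral_Ioc,
    ← intervalIntegral.integral_of_le (by linarith),
    intervalIntegral.integral_comp_sub_right (fun x => |x| ^ p), ← integral_abs_rpow_symm hp hc]
  congr 1 <;> ring

end SingularKernel

section WeightedKernel

variable {f : ℝ → ℝ} {p r c : ℝ}

lemma integrableOn_closedBall_mul_abs_sub_rpow {M : ℝ} (hp : -1 < p)
    (hf : AEStronglyMeasurable f (volume.restrict (Metric.closedBall r c)))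
    (hM : ∀ x ∈ Metric.closedBall r c, |f x| ≤ M) :
    IntegrableOn (fun x => f x * |x - r| ^ p) (Metric.closedBall r c) :=
  (integrableOn_closedBall_abs_sub_rpow hp r c).bdd_mul hf
    (ae_restrict_of_forall_mem Metric.isClosed_closedBall.measurableSet hM)

lemma setIntegral_closedBall_mul_abs_sub_rpow_le {M : ℝ} (hp : -1 < p) (hc : 0 ≤ c)
    (hf : ∀ x ∈ Metric.closedBall r c, 0 ≤ f x) (hM : ∀ x ∈ Metric.closedBall r c, f x ≤ M) :
    ∫ x in Metric.closedBall r c, f x * |x - r| ^ p ≤ M * (2 / (p + 1) * c ^ (p + 1)) := by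
  rw [← setIntegral_closedBall_abs_sub_rpow hp r hc, ← integral_const_mul]
  refine setIntegral_mono_of_nonneg (fun x hx => mul_nonneg (hf x hx) (by positivity))
    (fun x hx => ?_) ((integrableOn_closedBall_abs_sub_rpow hp r c).const_mul M)
  gcongr
  exact hM x hx

variable {S : Set ℝ}

lemma integrableOn_mul_abs_sub_rpow_of_le (hp : p ≤ 0) (hc : 0 < c) (hS : MeasurableSet S)
    (hSc : ∀ x ∈ S, c ≤ |x - r|) (hf : IntegrableOn f S) :
    IntegrableOn (fun x => f x * |x - r| ^ p) S := by
  have kernel_measurable : Measurable fun x : ℝ => |x - r| ^ p := by fun_prop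
  refine hf.mul_bdd (c := c ^ p) kernel_measurable.aestronglyMeasurable
    (ae_restrict_of_forall_mem hS fun x hx => ?_)
  rw [norm_of_nonneg (by positivity)]
  exact rpow_le_rpow_of_nonpos hc (hSc x hx) hp

lemma setIntegral_mul_abs_sub_rpow_le_of_le (hp : p ≤ 0) (hc : 0 < c)
    (hSc : ∀ x ∈ S, c ≤ |x - r|) (hf : IntegrableOn f S) (hf_nonneg : ∀ x ∈ S, 0 ≤ f x) :
    ∫ x in S, f x * |x - r| ^ p ≤ c ^ p * ∫ x in S, f x := by
  rw [← integral_const_mul]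
  refine setIntegral_mono_of_nonneg (fun x hx => mul_nonneg (hf_nonneg x hx) (by positivity))
    (fun x hx => ?_) (hf.const_mul _)
  rw [mul_comm]
  exact mul_le_mul_of_nonneg_right (rpow_le_rpow_of_nonpos hc (hSc x hx) hp) (hf_nonneg x hx)

end WeightedKernel

section AntitoneWeight

variable {f : ℝ → ℝ}

lemma mul_le_setIntegral_Ioi_of_antitoneOn (hf_anti : AntitoneOn f (Ioi 0))
    (hf_nonneg : ∀ x ∈ Ioi 0, 0 ≤ f x) (hf_int : IntegrableOn f (Ioi 0)) {c : ℝ} (hc : 0 < c) :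
    c * f c ≤ ∫ x in Ioi 0, f x :=
  calc c * f c = f c * volume.real (Ioc 0 c) := by
        rw [volume_real_Ioc_of_le hc.le, sub_zero, mul_comm]
    _ ≤ ∫ x in Ioc 0 c, f x :=
        setIntegral_ge_of_const_le_real measurableSet_Ioc measure_Ioc_lt_top.ne
          (fun _ hx => hf_anti hx.1 hc hx.2) (hf_int.mono_set Ioc_subset_Ioi_self)
    _ ≤ ∫ x in Ioi 0, f x :=
        setIntegral_mono_set hf_int (ae_restrict_of_forall_mem measurableSet_Ioi hf_nonneg)
          Ioc_subset_Ioi_self.eventuallyLE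

variable {p r : ℝ}

lemma closedBall_half_subset_Ici (r : ℝ) : Metric.closedBall r (r / 2) ⊆ Ici (r / 2) := by
  rw [Real.closedBall_eq_Icc, sub_half]
  exact Icc_subset_Ici_self

lemma closedBall_half_subset_Ioi_zero (hr : 0 < r) : Metric.closedBall r (r / 2) ⊆ Ioi 0 :=
  (closedBall_half_subset_Ici r).trans (Ici_subset_Ioi.2 (half_pos hr))

lemma le_apply_half_of_antitoneOn (hf_anti : AntitoneOn f (Ioi 0)) (hr : 0 < r) :
    ∀ x ∈ Metric.closedBall r (r / 2), f x ≤ f (r / 2) := fun _ hx =>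
  hf_anti (half_pos hr) (closedBall_half_subset_Ioi_zero hr hx) (closedBall_half_subset_Ici r hx)

lemma le_abs_sub_of_notMem_closedBall {c x : ℝ} (hx : x ∉ Metric.closedBall r c) :
    c ≤ |x - r| := by
  rw [Metric.mem_closedBall, Real.dist_eq, not_le] at hx
  exact hx.le

lemma integrableOn_Ioi_mul_abs_sub_rpow (hp : -1 < p) (hp₀ : p ≤ 0)
    (hf_anti : AntitoneOn f (Ioi 0)) (hf_nonneg : ∀ x ∈ Ioi 0, 0 ≤ f x)
    (hf_int : IntegrableOn f (Ioi 0)) (hr : 0 < r) :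
    IntegrableOn (fun x => f x * |x - r| ^ p) (Ioi 0) := by
  have ball_subset := closedBall_half_subset_Ioi_zero hr
  have near : IntegrableOn (fun x => f x * |x - r| ^ p) (Metric.closedBall r (r / 2)) := by
    refine integrableOn_closedBall_mul_abs_sub_rpow (M := f (r / 2)) hp
      (hf_int.mono_set ball_subset).aestronglyMeasurable fun x hx => ?_
    rw [abs_of_nonneg (hf_nonneg x (ball_subset hx))]
    exact le_apply_half_of_antitoneOn hf_anti hr x hx
  have far : IntegrableOn (fun x => f x * |x - r| ^ p) (Ioi 0 \ Metric.closedBall r (r / 2)) :=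
    integrableOn_mul_abs_sub_rpow_of_le hp₀ (half_pos hr)
      (measurableSet_Ioi.diff Metric.isClosed_closedBall.measurableSet)
      (fun _ hx => le_abs_sub_of_notMem_closedBall hx.2) (hf_int.mono_set sdiff_subset)
  simpa only [union_sdiff_cancel ball_subset] using near.union far

lemma setIntegral_Ioi_mul_abs_sub_rpow_le (hp : -1 < p) (hp₀ : p ≤ 0)
    (hf_anti : AntitoneOn f (Ioi 0)) (hf_nonneg : ∀ x ∈ Ioi 0, 0 ≤ f x)
    (hf_int : IntegrableOn f (Ioi 0)) (hr : 0 < r) :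
    ∫ x in Ioi 0, f x * |x - r| ^ p ≤ (p + 3) / (p + 1) * (r / 2) ^ p * ∫ x in Ioi 0, f x := by
  have hp₁ : 0 < p + 1 := by linarith
  have ball_subset := closedBall_half_subset_Ioi_zero hr
  have near : ∫ x in Metric.closedBall r (r / 2), f x * |x - r| ^ p ≤
      2 / (p + 1) * (r / 2) ^ p * ∫ x in Ioi 0, f x :=
    calc ∫ x in Metric.closedBall r (r / 2), f x * |x - r| ^ p
        ≤ f (r / 2) * (2 / (p + 1) * (r / 2) ^ (p + 1)) :=
          setIntegral_closedBall_mul_abs_sub_rpow_le hp (half_pos hr).le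
            (fun x hx => hf_nonneg x (ball_subset hx)) (le_apply_half_of_antitoneOn hf_anti hr)
      _ = 2 / (p + 1) * (r / 2) ^ p * (r / 2 * f (r / 2)) := by
          rw [rpow_add_one (half_pos hr).ne']
          ring
      _ ≤ 2 / (p + 1) * (r / 2) ^ p * ∫ x in Ioi 0, f x := by
          gcongr
          exact mul_le_setIntegral_Ioi_of_antitoneOn hf_anti hf_nonneg hf_int (half_pos hr)
  have far : ∫ x in Ioi 0 \ Metric.closedBall r (r / 2), f x * |x - r| ^ p ≤
      (r / 2) ^ p * ∫ x in Ioi 0, f x :=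
    calc ∫ x in Ioi 0 \ Metric.closedBall r (r / 2), f x * |x - r| ^ p
        ≤ (r / 2) ^ p * ∫ x in Ioi 0 \ Metric.closedBall r (r / 2), f x :=
          setIntegral_mul_abs_sub_rpow_le_of_le hp₀ (half_pos hr)
            (fun _ hx => le_abs_sub_of_notMem_closedBall hx.2) (hf_int.mono_set sdiff_subset)
            (fun x hx => hf_nonneg x hx.1)
      _ ≤ (r / 2) ^ p * ∫ x in Ioi 0, f x := by
          gcongr
          · exact ae_restrict_of_forall_mem measurableSet_Ioi hf_nonneg
          · exact sdiff_subset
  rw [← integral_inter_add_sdiff Metric.isClosed_closedBall.measurableSet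
    (integrableOn_Ioi_mul_abs_sub_rpow hp hp₀ hf_anti hf_nonneg hf_int hr),
    inter_eq_right.2 ball_subset]
  refine (add_le_add near far).trans_eq ?_
  field_simp
  ring

end AntitoneWeight

section TranslatedWeight

variable {f g : ℝ → ℝ} {p s t T η : ℝ}

lemma integral_comp_sub_left_endpoint_le (hf_nonneg : ∀ x ∈ Ioi 0, 0 ≤ f x)
    (hf_int : IntegrableOn f (Ioi 0)) (hsT : s ≤ T) :
    ∫ x in s..T, f (x - s) ≤ ∫ x in Ioi 0, f x := by
  rw [intervalIntegral.integral_comp_sub_right, sub_self,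
    intervalIntegral.integral_of_le (sub_nonneg.2 hsT)]
  exact setIntegral_mono_set hf_int (ae_restrict_of_forall_mem measurableSet_Ioi hf_nonneg)
    Ioc_subset_Ioi_self.eventuallyLE

lemma integrableOn_Ioc_comp_sub_left_endpoint (hf_int : IntegrableOn f (Ioi 0)) (hsT : s ≤ T) :
    IntegrableOn (fun x => f (x - s)) (Ioc s T) := by
  rw [← intervalIntegrable_iff_integrableOn_Ioc_of_le hsT]
  have hf : IntervalIntegrable f volume 0 (T - s) :=
    (intervalIntegrable_iff_integrableOn_Ioc_of_le (sub_nonneg.2 hsT)).2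
      (hf_int.mono_set Ioc_subset_Ioi_self)
  simpa using hf.comp_sub_right s

lemma integral_mul_abs_sub_rpow_le (hp : -1 < p) (hp₀ : p ≤ 0)
    (hf_anti : AntitoneOn f (Ioi 0)) (hf_nonneg : ∀ x ∈ Ioi 0, 0 ≤ f x)
    (hf_int : IntegrableOn f (Ioi 0)) (hsη : s < η) (hsT : s ≤ T) :
    ∫ ξ in s..T, f (ξ - s) * |ξ - η| ^ p ≤
      (p + 3) / (p + 1) * ((η - s) / 2) ^ p * ∫ x in Ioi 0, f x :=
  have hr : 0 < η - s := sub_pos.2 hsη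
  calc ∫ ξ in s..T, f (ξ - s) * |ξ - η| ^ p
      = ∫ ξ in s..T, f (ξ - s) * |ξ - s - (η - s)| ^ p := by simp only [sub_sub_sub_cancel_right]
    _ ≤ ∫ x in Ioi 0, f x * |x - (η - s)| ^ p :=
        integral_comp_sub_left_endpoint_le (f := fun x => f x * |x - (η - s)| ^ p)
          (fun x hx => mul_nonneg (hf_nonneg x hx) (by positivity))
          (integrableOn_Ioi_mul_abs_sub_rpow hp hp₀ hf_anti hf_nonneg hf_int hr) hsT
    _ ≤ _ := setIntegral_Ioi_mul_abs_sub_rpow_le hp hp₀ hf_anti hf_nonneg hf_int hr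

theorem stmt_7_general (hp : -1 < p) (hp₀ : p ≤ 0)
    (hf_anti : AntitoneOn f (Ioi 0)) (hf_nonneg : ∀ x ∈ Ioi 0, 0 ≤ f x)
    (hf_int : IntegrableOn f (Ioi 0)) (hg_nonneg : ∀ x ∈ Ioi 0, 0 ≤ g x)
    (hg_int : IntegrableOn g (Ioi 0)) (hst : s < t) (htT : t ≤ T) :
    ∫ η in t..T, ∫ ξ in s..T, f (ξ - s) * g (η - t) * |ξ - η| ^ p ≤
      (p + 3) / (p + 1) * ((t - s) / 2) ^ p * (∫ x in Ioi 0, f x) * ∫ x in Ioi 0, g x := by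
  have hsT : s ≤ T := hst.le.trans htT
  have hts : 0 < (t - s) / 2 := half_pos (sub_pos.2 hst)
  have hp_ratio : 0 ≤ (p + 3) / (p + 1) := div_nonneg (by linarith) (by linarith)
  have hf_integral : 0 ≤ ∫ x in Ioi 0, f x := setIntegral_nonneg measurableSet_Ioi hf_nonneg
  set K := (p + 3) / (p + 1) * ((t - s) / 2) ^ p * ∫ x in Ioi 0, f x with hK
  have hK_nonneg : 0 ≤ K := by positivity
  have inner_nonneg (η : ℝ) : 0 ≤ ∫ ξ in s..T, f (ξ - s) * |ξ - η| ^ p := by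
    rw [intervalIntegral.integral_of_le hsT]
    exact setIntegral_nonneg measurableSet_Ioc fun ξ hξ =>
      mul_nonneg (hf_nonneg _ (sub_pos.2 hξ.1)) (by positivity)
  have inner_le {η : ℝ} (hη : t < η) : ∫ ξ in s..T, f (ξ - s) * |ξ - η| ^ p ≤ K := by
    refine (integral_mul_abs_sub_rpow_le hp hp₀ hf_anti hf_nonneg hf_int
      (hst.trans hη) hsT).trans ?_
    rw [hK]
    gcongr ?_ * ?_ * _
    exact rpow_le_rpow_of_nonpos hts (by linarith) hp₀
  calc ∫ η in t..T, ∫ ξ in s..T, f (ξ - s) * g (η - t) * |ξ - η| ^ p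
      = ∫ η in t..T, (∫ ξ in s..T, f (ξ - s) * |ξ - η| ^ p) * g (η - t) := by
        simp only [mul_right_comm _ (g _), intervalIntegral.integral_mul_const]
    _ ≤ ∫ η in t..T, K * g (η - t) := by
        simp only [intervalIntegral.integral_of_le htT]
        refine setIntegral_mono_of_nonneg
          (fun η hη => mul_nonneg (inner_nonneg η) (hg_nonneg _ (sub_pos.2 hη.1)))
          (fun η hη => mul_le_mul_of_nonneg_right (inner_le hη.1) (hg_nonneg _ (sub_pos.2 hη.1)))
          ((integrableOn_Ioc_comp_sub_left_endpoint hg_int htT).const_mul K)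
    _ ≤ K * ∫ x in Ioi 0, g x := by
        rw [intervalIntegral.integral_const_mul]
        exact mul_le_mul_of_nonneg_left
          (integral_comp_sub_left_endpoint_le hg_nonneg hg_int htT) hK_nonneg

end TranslatedWeight

section Exponential

variable {θ : ℝ}

lemma antitone_exp_neg_mul (hθ : 0 ≤ θ) : Antitone fun x => exp (-θ * x) := fun _ _ hxy =>
  exp_le_exp.2 (mul_le_mul_of_nonpos_left hxy (neg_nonpos.2 hθ))

lemma integral_exp_neg_mul_Ioi_zero (hθ : 0 < θ) : ∫ x in Ioi 0, exp (-θ * x) = 1 / θ := by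
  simpa using integral_exp_mul_Ioi (neg_neg_of_pos hθ) 0

end Exponential

theorem stmt_7 (H θ : ℝ) (h1 : 1/2 < H) (h2 : H < 1) (hθ : 0 < θ) :
    ∃ C : ℝ, 0 < C ∧ ∀ s t T : ℝ, 0 ≤ s → s < t → t ≤ T →
      H * (2*H - 1) * ∫ η in t..T, ∫ ξ in s..T,
        Real.exp (-θ * (ξ - s)) * Real.exp (-θ * (η - t)) * |ξ - η| ^ (2*H - 2)
        ≤ C * (t - s) ^ (2*H - 2) := by
  have hH : 0 < H * (2 * H - 1) := mul_pos (by linarith) (by linarith)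
  have hp : 0 < (2 * H - 2 + 3) / (2 * H - 2 + 1) := div_pos (by linarith) (by linarith)
  have exp_int : IntegrableOn (fun x => exp (-θ * x)) (Ioi 0) := exp_neg_integrableOn_Ioi 0 hθ
  have exp_nonneg : ∀ x ∈ Ioi (0 : ℝ), 0 ≤ exp (-θ * x) := fun x _ => (exp_pos _).le
  refine ⟨H * (2 * H - 1) *
    ((2 * H - 2 + 3) / (2 * H - 2 + 1) / 2 ^ (2 * H - 2) * (1 / θ) * (1 / θ)), by positivity,
    fun s t T _ hst htT => ?_⟩
  have double_integral_le := stmt_7_general (p := 2 * H - 2) (by linarith) (by linarith)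
    ((antitone_exp_neg_mul hθ.le).antitoneOn _) exp_nonneg exp_int exp_nonneg exp_int hst htT
  rw [integral_exp_neg_mul_Ioi_zero hθ, div_rpow (sub_pos.2 hst).le zero_le_two]
    at double_integral_le
  exact (mul_le_mul_of_nonneg_left double_integral_le hH.le).trans_eq (by ring)
end

section
/- Let 1/2 < H < 1 and θ > 0. There exists a constant C = C_{θ,H} > 0 such that for all real numbers s, t with 0 ≤ s < t, one has H(2H-1) ∫₀^t ∫₀^s e^{-θ(t-u)} e^{-θ(s-v)} |u-v|^{2H-2} dv du ≤ C (t-s)^{2H-2}. -/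
open MeasureTheory Real Set

/-!
Write `a = 2 - 2H ∈ (0, 1)`. An exponential average of the singular kernel does not spoil its decay:
`∫ v in c..s, exp (-θ (s - v)) |p - v| ^ (-a) ≤ C |p - s| ^ (-a)`, with `C` independent of `p`, `s`
and `c`. Using this once in `v` (with `p = u`) and once in `u` (with `p = s`) gives the theorem with
the constant `H (2H - 1) C²`.

To prove the one-variable bound, shift the exponential to the origin and set `q = s - p`.
Subadditivity of `x ↦ x ^ a` gives `|q| ^ a |x - q| ^ (-a) ≤ 1 + x ^ a |x - q| ^ (-a)`, so it is
enough that `exp (-θ x)` is integrable on `(0, ∞)` and that `x ^ a exp (-θ x)` has a bounded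
convolution with `|x| ^ (-a)`. The latter holds because this function is both integrable, which
handles the kernel away from its singularity, and bounded, which handles it near the singularity.
-/

section NormKernel

variable {E : Type*} [SeminormedAddCommGroup E] {a : ℝ}

lemma norm_rpow_mul_norm_sub_rpow_neg_le (ha : 0 ≤ a) (ha' : a ≤ 1) (q x : E) :
    ‖q‖ ^ a * ‖x - q‖ ^ (-a) ≤ 1 + ‖x‖ ^ a * ‖x - q‖ ^ (-a) := by
  have subadditive : ‖q‖ ^ a ≤ ‖x - q‖ ^ a + ‖x‖ ^ a := calc
    ‖q‖ ^ a ≤ (‖x - q‖ + ‖x‖) ^ a := by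
      gcongr
      simpa only [norm_sub_rev q x, sub_add_cancel] using norm_add_le (q - x) x
    _ ≤ ‖x - q‖ ^ a + ‖x‖ ^ a := rpow_add_le_add_rpow (norm_nonneg _) (norm_nonneg _) ha ha'
  have cancel : ‖x - q‖ ^ a * ‖x - q‖ ^ (-a) ≤ 1 := by
    rw [rpow_neg (norm_nonneg _)]
    exact mul_inv_le_one
  calc ‖q‖ ^ a * ‖x - q‖ ^ (-a)
      ≤ (‖x - q‖ ^ a + ‖x‖ ^ a) * ‖x - q‖ ^ (-a) := by gcongr
    _ = ‖x - q‖ ^ a * ‖x - q‖ ^ (-a) + ‖x‖ ^ a * ‖x - q‖ ^ (-a) := add_mul _ _ _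
    _ ≤ 1 + ‖x‖ ^ a * ‖x - q‖ ^ (-a) := by gcongr

lemma norm_rpow_neg_le_one_add_indicator_ball (ha : 0 ≤ a) (x : E) :
    ‖x‖ ^ (-a) ≤ 1 + (Metric.ball 0 1).indicator (fun y : E ↦ ‖y‖ ^ (-a)) x := by
  by_cases hx : x ∈ Metric.ball 0 1
  · rw [indicator_of_mem hx]
    exact le_add_of_nonneg_left zero_le_one
  · rw [indicator_of_notMem hx, add_zero]
    rw [mem_ball_zero_iff, not_lt] at hx
    exact rpow_le_one_of_one_le_of_nonpos hx (neg_nonpos.2 ha)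

lemma mul_norm_rpow_neg_le_add_indicator_ball (ha : 0 ≤ a) {b K : ℝ} (hb : 0 ≤ b) (hbK : b ≤ K)
    (x : E) :
    b * ‖x‖ ^ (-a) ≤ b + K * (Metric.ball 0 1).indicator (fun y : E ↦ ‖y‖ ^ (-a)) x := by
  have : 0 ≤ (Metric.ball 0 1).indicator (fun y : E ↦ ‖y‖ ^ (-a)) x :=
    indicator_nonneg (fun _ _ ↦ by positivity) x
  calc b * ‖x‖ ^ (-a)
      ≤ b * (1 + (Metric.ball 0 1).indicator (fun y : E ↦ ‖y‖ ^ (-a)) x) := by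
        gcongr
        exact norm_rpow_neg_le_one_add_indicator_ball ha x
    _ ≤ b + K * (Metric.ball 0 1).indicator (fun y : E ↦ ‖y‖ ^ (-a)) x := by
        rw [mul_one_add]
        gcongr

variable [MeasurableSpace E] [BorelSpace E] {μ : Measure E} [μ.IsAddRightInvariant]
  {S : Set E} {g : E → ℝ} {K : ℝ}

lemma integrable_indicator_ball_norm_sub_rpow
    (hker : IntegrableOn (fun x : E ↦ ‖x‖ ^ (-a)) (Metric.ball 0 1) μ) (q : E) :
    Integrable (fun x ↦ (Metric.ball 0 1).indicator (fun y : E ↦ ‖y‖ ^ (-a)) (x - q)) μ :=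
  (hker.integrable_indicator measurableSet_ball).comp_sub_right q

lemma integrableOn_mul_norm_sub_rpow_neg (ha : 0 ≤ a)
    (hker : IntegrableOn (fun x : E ↦ ‖x‖ ^ (-a)) (Metric.ball 0 1) μ)
    (hS : MeasurableSet S) (hg : IntegrableOn g S μ) (hg0 : ∀ x ∈ S, 0 ≤ g x)
    (hgK : ∀ x ∈ S, g x ≤ K) (q : E) :
    IntegrableOn (fun x ↦ g x * ‖x - q‖ ^ (-a)) S μ := by
  refine Integrable.mono'
    (hg.add ((integrable_indicator_ball_norm_sub_rpow hker q).integrableOn.const_mul K)) ?_ ?_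
  · have hmeas : Measurable fun x : E ↦ ‖x - q‖ ^ (-a) := by fun_prop
    exact hg.aestronglyMeasurable.mul hmeas.aestronglyMeasurable
  · filter_upwards [ae_restrict_mem hS] with x hx
    have := hg0 x hx
    rw [Real.norm_of_nonneg (by positivity)]
    exact mul_norm_rpow_neg_le_add_indicator_ball ha this (hgK x hx) (x - q)

lemma setIntegral_mul_norm_sub_rpow_neg_le (ha : 0 ≤ a)
    (hker : IntegrableOn (fun x : E ↦ ‖x‖ ^ (-a)) (Metric.ball 0 1) μ)
    (hS : MeasurableSet S) (hg : IntegrableOn g S μ) (hg0 : ∀ x ∈ S, 0 ≤ g x)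
    (hK : 0 ≤ K) (hgK : ∀ x ∈ S, g x ≤ K) (q : E) :
    ∫ x in S, g x * ‖x - q‖ ^ (-a) ∂μ ≤
      (∫ x in S, g x ∂μ) + K * ∫ x in Metric.ball 0 1, ‖x‖ ^ (-a) ∂μ := by
  set φ : E → ℝ := (Metric.ball 0 1).indicator fun y ↦ ‖y‖ ^ (-a)
  have hφ : Integrable (fun x ↦ φ (x - q)) μ := integrable_indicator_ball_norm_sub_rpow hker q
  have hφ0 : ∀ x, 0 ≤ φ (x - q) := fun x ↦ indicator_nonneg (fun _ _ ↦ by positivity) _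
  calc ∫ x in S, g x * ‖x - q‖ ^ (-a) ∂μ
      ≤ ∫ x in S, (g x + K * φ (x - q)) ∂μ :=
        setIntegral_mono_on (integrableOn_mul_norm_sub_rpow_neg ha hker hS hg hg0 hgK q)
          (hg.add (hφ.integrableOn.const_mul K)) hS fun x hx ↦
            mul_norm_rpow_neg_le_add_indicator_ball ha (hg0 x hx) (hgK x hx) (x - q)
    _ = (∫ x in S, g x ∂μ) + K * ∫ x in S, φ (x - q) ∂μ := by
        rw [integral_add hg (hφ.integrableOn.const_mul K), integral_const_mul]
    _ ≤ (∫ x in S, g x ∂μ) + K * ∫ x, φ (x - q) ∂μ := by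
        gcongr _ + K * ?_
        exact setIntegral_le_integral hφ (.of_forall hφ0)
    _ = (∫ x in S, g x ∂μ) + K * ∫ x in Metric.ball 0 1, ‖x‖ ^ (-a) ∂μ := by
        rw [integral_sub_right_eq_self φ q, integral_indicator measurableSet_ball]

lemma norm_rpow_mul_setIntegral_mul_norm_sub_rpow_neg_le (ha : 0 ≤ a) (ha' : a ≤ 1)
    (hker : IntegrableOn (fun x : E ↦ ‖x‖ ^ (-a)) (Metric.ball 0 1) μ)
    (hS : MeasurableSet S) (hg : IntegrableOn g S μ)
    (hg' : IntegrableOn (fun x ↦ ‖x‖ ^ a * g x) S μ) (hg0 : ∀ x ∈ S, 0 ≤ g x)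
    (hK : 0 ≤ K) (hgK : ∀ x ∈ S, ‖x‖ ^ a * g x ≤ K) (q : E) :
    ‖q‖ ^ a * ∫ x in S, g x * ‖x - q‖ ^ (-a) ∂μ ≤
      (∫ x in S, g x ∂μ) +
        ((∫ x in S, ‖x‖ ^ a * g x ∂μ) + K * ∫ x in Metric.ball 0 1, ‖x‖ ^ (-a) ∂μ) := by
  have hg0' : ∀ x ∈ S, 0 ≤ ‖x‖ ^ a * g x := fun x hx ↦ mul_nonneg (by positivity) (hg0 x hx)
  have hint := integrableOn_mul_norm_sub_rpow_neg ha hker hS hg' hg0' hgK q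
  calc ‖q‖ ^ a * ∫ x in S, g x * ‖x - q‖ ^ (-a) ∂μ
      = ∫ x in S, ‖q‖ ^ a * (g x * ‖x - q‖ ^ (-a)) ∂μ := (integral_const_mul _ _).symm
    _ ≤ ∫ x in S, (g x + ‖x‖ ^ a * g x * ‖x - q‖ ^ (-a)) ∂μ := by
        refine integral_mono_of_nonneg ?_ (hg.add hint) ?_ <;>
          filter_upwards [ae_restrict_mem hS] with x hx
        · have := hg0 x hx
          simp only [Pi.zero_apply]
          positivity
        · linear_combination
            mul_le_mul_of_nonneg_left (norm_rpow_mul_norm_sub_rpow_neg_le ha ha' q x) (hg0 x hx)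
    _ = (∫ x in S, g x ∂μ) + ∫ x in S, ‖x‖ ^ a * g x * ‖x - q‖ ^ (-a) ∂μ := integral_add hg hint
    _ ≤ _ := by
        gcongr
        exact setIntegral_mul_norm_sub_rpow_neg_le ha hker hS hg' hg0' hK hgK q

end NormKernel

lemma integrableOn_ball_norm_rpow_neg {E : Type*} [NormedAddCommGroup E] [NormedSpace ℝ E]
    [FiniteDimensional ℝ E] [MeasurableSpace E] [BorelSpace E] {μ : Measure E}
    [μ.IsAddHaarMeasure] {a : ℝ} (hE : 1 ≤ Module.finrank ℝ E) (ha : a < Module.finrank ℝ E)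
    (r : ℝ) :
    IntegrableOn (fun x : E ↦ ‖x‖ ^ (-a)) (Metric.ball 0 r) μ := by
  have hmeas : Measurable fun x : E ↦ ‖x‖ ^ (-a) := by fun_prop
  refine integrableOn_ball_of_norm_le_rpow (C := 1) hE ha (.of_forall fun x ↦ ?_)
    hmeas.aestronglyMeasurable
  rw [one_mul, Real.norm_of_nonneg (by positivity)]

section ExponentialWeight

variable {a θ : ℝ}

lemma rpow_mul_exp_neg_mul_le (ha : 0 < a) (hθ : 0 < θ) {x : ℝ} (hx : 0 ≤ x) :
    x ^ a * exp (-θ * x) ≤ (a / θ * exp (-1)) ^ a := by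
  have base : x * exp (-(θ * x / a)) ≤ a / θ * exp (-1) := calc
    x * exp (-(θ * x / a)) = a / θ * (θ * x / a * exp (-(θ * x / a))) := by field_simp
    _ ≤ a / θ * exp (-1) := by
      gcongr
      exact mul_exp_neg_le_exp_neg_one _
  calc x ^ a * exp (-θ * x) = (x * exp (-(θ * x / a))) ^ a := by
        rw [mul_rpow hx (exp_pos _).le, ← exp_mul]
        congr 2
        field_simp
    _ ≤ (a / θ * exp (-1)) ^ a := by gcongr

lemma integrableOn_rpow_mul_exp_neg_mul (ha : -1 < a) (hθ : 0 < θ) :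
    IntegrableOn (fun x ↦ x ^ a * exp (-θ * x)) (Ioi 0) := by
  simpa only [rpow_one] using integrableOn_rpow_mul_exp_neg_mul_rpow ha one_pos hθ

lemma integrableOn_exp_neg_mul_abs_sub_rpow_neg (ha : 0 ≤ a) (ha' : a < 1) (hθ : 0 < θ) (q : ℝ) :
    IntegrableOn (fun x ↦ exp (-θ * x) * |x - q| ^ (-a)) (Ioi 0) :=
  integrableOn_mul_norm_sub_rpow_neg (K := 1) ha
    (integrableOn_ball_norm_rpow_neg (by simp) (by simpa using ha') 1)
    measurableSet_Ioi (exp_neg_integrableOn_Ioi 0 hθ) (fun x _ ↦ (exp_pos _).le)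
    (fun x (hx : 0 < x) ↦ exp_le_one_iff.2 (by nlinarith)) q

lemma exists_setIntegral_exp_neg_mul_abs_sub_rpow_neg_le (ha : 0 < a) (ha' : a < 1) (hθ : 0 < θ) :
    ∃ C, 0 < C ∧ ∀ q ≠ 0,
      ∫ x in Ioi 0, exp (-θ * x) * |x - q| ^ (-a) ≤ C * |q| ^ (-a) := by
  have hmoment : EqOn (fun x ↦ x ^ a * exp (-θ * x)) (fun x ↦ ‖x‖ ^ a * exp (-θ * x)) (Ioi 0) :=
    fun x (hx : 0 < x) ↦ by simp only [Real.norm_of_nonneg hx.le]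
  obtain ⟨M, hM⟩ : ∃ M, ∀ q, |q| ^ a * ∫ x in Ioi 0, exp (-θ * x) * |x - q| ^ (-a) ≤ M :=
    ⟨_, norm_rpow_mul_setIntegral_mul_norm_sub_rpow_neg_le (K := (a / θ * exp (-1)) ^ a)
      ha.le ha'.le (integrableOn_ball_norm_rpow_neg (by simp) (by simpa using ha') 1)
      measurableSet_Ioi (exp_neg_integrableOn_Ioi 0 hθ)
      ((integrableOn_rpow_mul_exp_neg_mul (by linarith) hθ).congr_fun hmoment measurableSet_Ioi)
      (fun x _ ↦ (exp_pos _).le) (by positivity)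
      (fun x hx ↦ (hmoment hx).symm.trans_le (rpow_mul_exp_neg_mul_le ha hθ (le_of_lt hx)))⟩
  refine ⟨max M 1, by positivity, fun q hq ↦ ?_⟩
  rw [rpow_neg (abs_nonneg q), ← div_eq_mul_inv, le_div_iff₀' (by positivity)]
  exact (hM q).trans (le_max_left M 1)

end ExponentialWeight

section ExponentialAverage

variable {a θ : ℝ}

lemma intervalIntegrable_exp_neg_mul_sub_mul_abs_sub_rpow_neg (ha : 0 ≤ a) (ha' : a < 1)
    (hθ : 0 < θ) (p : ℝ) {c s : ℝ} (hcs : c ≤ s) :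
    IntervalIntegrable (fun v ↦ exp (-θ * (s - v)) * |p - v| ^ (-a)) volume c s := by
  have hint : IntervalIntegrable (fun x ↦ exp (-θ * x) * |x - (s - p)| ^ (-a)) volume 0 (s - c) :=
    (intervalIntegrable_iff_integrableOn_Ioc_of_le (sub_nonneg.2 hcs)).2
      ((integrableOn_exp_neg_mul_abs_sub_rpow_neg ha ha' hθ (s - p)).mono_set Ioc_subset_Ioi_self)
  simpa [sub_sub_sub_cancel_left] using (hint.comp_sub_left s).symm

lemma exists_intervalIntegral_exp_neg_mul_abs_sub_rpow_neg_le (ha : 0 < a) (ha' : a < 1)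
    (hθ : 0 < θ) :
    ∃ C, 0 < C ∧ ∀ p c s, c ≤ s → p ≠ s →
      ∫ v in c..s, exp (-θ * (s - v)) * |p - v| ^ (-a) ≤ C * |p - s| ^ (-a) := by
  obtain ⟨C, hC, hbound⟩ := exists_setIntegral_exp_neg_mul_abs_sub_rpow_neg_le ha ha' hθ
  refine ⟨C, hC, fun p c s hcs hps ↦ ?_⟩
  calc ∫ v in c..s, exp (-θ * (s - v)) * |p - v| ^ (-a)
      = ∫ x in 0..s - c, exp (-θ * x) * |x - (s - p)| ^ (-a) := by
        simpa [sub_sub_sub_cancel_left] using intervalIntegral.integral_comp_sub_left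
          (fun x ↦ exp (-θ * x) * |x - (s - p)| ^ (-a)) (a := c) (b := s) s
    _ ≤ ∫ x in Ioi 0, exp (-θ * x) * |x - (s - p)| ^ (-a) := by
        rw [intervalIntegral.integral_of_le (sub_nonneg.2 hcs)]
        exact setIntegral_mono_set (integrableOn_exp_neg_mul_abs_sub_rpow_neg ha.le ha' hθ _)
          (.of_forall fun x ↦ by simp only [Pi.zero_apply]; positivity)
          Ioc_subset_Ioi_self.eventuallyLE
    _ ≤ C * |p - s| ^ (-a) := by
        rw [abs_sub_comm p s]
        exact hbound _ (sub_ne_zero.2 hps.symm)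

lemma exists_integral_integral_exp_neg_mul_abs_sub_rpow_neg_le (ha : 0 < a) (ha' : a < 1)
    {θ₁ θ₂ : ℝ} (hθ₁ : 0 < θ₁) (hθ₂ : 0 < θ₂) :
    ∃ C, 0 < C ∧ ∀ b c s t, b ≤ t → c ≤ s → s ≠ t →
      ∫ u in b..t, ∫ v in c..s, exp (-θ₁ * (t - u)) * exp (-θ₂ * (s - v)) * |u - v| ^ (-a) ≤
        C * |s - t| ^ (-a) := by
  obtain ⟨C₁, hC₁, hbound₁⟩ := exists_intervalIntegral_exp_neg_mul_abs_sub_rpow_neg_le ha ha' hθ₁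
  obtain ⟨C₂, hC₂, hbound₂⟩ := exists_intervalIntegral_exp_neg_mul_abs_sub_rpow_neg_le ha ha' hθ₂
  refine ⟨C₂ * C₁, mul_pos hC₂ hC₁, fun b c s t hbt hcs hst ↦ ?_⟩
  have inner (u : ℝ) (hus : u ≠ s) :
      ∫ v in c..s, exp (-θ₁ * (t - u)) * exp (-θ₂ * (s - v)) * |u - v| ^ (-a) ≤
        C₂ * (exp (-θ₁ * (t - u)) * |s - u| ^ (-a)) := by
    simp only [mul_assoc, intervalIntegral.integral_const_mul]
    rw [mul_left_comm, abs_sub_comm s u]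
    gcongr
    exact hbound₂ u c s hcs hus
  calc ∫ u in b..t, ∫ v in c..s, exp (-θ₁ * (t - u)) * exp (-θ₂ * (s - v)) * |u - v| ^ (-a)
      ≤ ∫ u in b..t, C₂ * (exp (-θ₁ * (t - u)) * |s - u| ^ (-a)) := by
        simp only [intervalIntegral.integral_of_le hbt]
        refine integral_mono_of_nonneg ?_ ?_ ?_
        · exact .of_forall fun u ↦ intervalIntegral.integral_nonneg hcs fun v _ ↦ by positivity
        · exact ((intervalIntegrable_exp_neg_mul_sub_mul_abs_sub_rpow_neg ha.le ha' hθ₁ s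
            hbt).const_mul C₂).1
        · filter_upwards [ae_restrict_of_ae (Measure.ae_ne volume s)] with u hus
          exact inner u hus
    _ = C₂ * ∫ u in b..t, exp (-θ₁ * (t - u)) * |s - u| ^ (-a) :=
        intervalIntegral.integral_const_mul _ _
    _ ≤ C₂ * (C₁ * |s - t| ^ (-a)) := by
        gcongr
        exact hbound₁ s b t hbt hst
    _ = C₂ * C₁ * |s - t| ^ (-a) := (mul_assoc _ _ _).symm

end ExponentialAverage

theorem stmt_8 (H θ : ℝ) (h1 : 1/2 < H) (h2 : H < 1) (hθ : 0 < θ) :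
    ∃ C : ℝ, 0 < C ∧ ∀ s t : ℝ, 0 ≤ s → s < t →
      H * (2*H - 1) * ∫ u in (0:ℝ)..t, ∫ v in (0:ℝ)..s,
        Real.exp (-θ * (t - u)) * Real.exp (-θ * (s - v)) * |u - v| ^ (2*H - 2)
        ≤ C * (t - s) ^ (2*H - 2) := by
  obtain ⟨C, hC, hbound⟩ := exists_integral_integral_exp_neg_mul_abs_sub_rpow_neg_le
    (a := 2 - 2 * H) (by linarith) (by linarith) hθ hθ
  have hH : 0 < H * (2 * H - 1) := mul_pos (by linarith) (by linarith)
  refine ⟨H * (2 * H - 1) * C, mul_pos hH hC, fun s t hs hst ↦ ?_⟩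
  have hcov := hbound 0 0 s t (hs.trans hst.le) hs hst.ne
  rw [neg_sub, abs_sub_comm s t, abs_of_pos (sub_pos.2 hst)] at hcov
  rw [mul_assoc _ C]
  gcongr
end

section
/- Let 1/2 < H < 3/4 and θ > 0. For T > 0 define I(T) = ∫_{[0,T]⁴} e^{-θ|s₂-u₂| - θ|s₁-u₁|} |s₂-s₁|^{2H-2} |u₂-u₁|^{2H-2} du₁ du₂ ds₁ ds₂. Then I is differentiable on (0,∞) with derivative I′(T) = 4 ∫_{[0,T]³} e^{-θx₁ - θ|x₂-x₃|} x₃^{2H-2} |x₁-x₂|^{2H-2} dx₁ dx₂ dx₃. -/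
open MeasureTheory Real Set

open Filter Topology Function

/-!
The integrand is a product of kernels along the 4-cycle `s₁ - s₂ - u₂ - u₁ - s₁`, each depending
only on the difference of its endpoints. Exchanging `s` with `u` and exchanging the indices `1` and
`2` preserve the integrand and together permute the four variables transitively, so `I(T)` is four
times the integral over the part of the cube where `s₁` is the largest variable. Slice this part at
`s₁ = t` and substitute the lags `t - s₂`, `t - u₁`, `t - u₂`: by translation invariance the slice
integral is `∫_{[0,t]³} G` for a function `G` that does not depend on `t`. Hence
`I(T) = 4 ∫₀ᵀ ∫_{[0,t]³} G dt`, and since `t ↦ ∫_{[0,t]³} G` is continuous, the fundamental theorem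
of calculus applies.
-/

section SetIntegral

variable {α β E : Type*} [MeasurableSpace α] [MeasurableSpace β] {μ : Measure α} {ν : Measure β}
  [NormedAddCommGroup E] {S : ℝ → Set α} {f : α → E}

theorem ae_eventually_mem_prod_iff {S' : ℝ → Set β} {t : ℝ}
    (h : ∀ᵐ x ∂μ, ∀ᶠ s in 𝓝 t, (x ∈ S s ↔ x ∈ S t))
    (h' : ∀ᵐ y ∂ν, ∀ᶠ s in 𝓝 t, (y ∈ S' s ↔ y ∈ S' t)) :
    ∀ᵐ p ∂μ.prod ν, ∀ᶠ s in 𝓝 t, (p ∈ S s ×ˢ S' s ↔ p ∈ S t ×ˢ S' t) := by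
  filter_upwards [Measure.quasiMeasurePreserving_fst.ae h,
    Measure.quasiMeasurePreserving_snd.ae h'] with p hp hp'
  filter_upwards [hp, hp'] with s hs hs'
  simp only [mem_prod, hs, hs']

theorem ae_eventually_mem_Icc_iff (a t : ℝ) :
    ∀ᵐ x : ℝ, ∀ᶠ s in 𝓝 t, (x ∈ Icc a s ↔ x ∈ Icc a t) := by
  filter_upwards [Measure.ae_ne volume t] with x hx
  rcases hx.lt_or_gt with hlt | hgt
  · filter_upwards [eventually_gt_nhds hlt] with s hs
    simp only [mem_Icc, hs.le, hlt.le]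
  · filter_upwards [eventually_lt_nhds hgt] with s hs
    simp only [mem_Icc, hs.not_ge, hgt.not_ge]

theorem ae_prod_ne_of_forall_ae_ne [SFinite ν] {g : α → ℝ} {h : β → ℝ}
    (hg : Measurable g) (hh : Measurable h) (hne : ∀ c, ∀ᵐ y ∂ν, h y ≠ c) :
    ∀ᵐ p ∂μ.prod ν, h p.2 ≠ g p.1 := by
  have hmeas : MeasurableSet {p : α × β | h p.2 ≠ g p.1} :=
    (measurableSet_eq_fun (hh.comp measurable_snd) (hg.comp measurable_fst)).compl
  exact (Measure.ae_prod_iff_ae_ae hmeas).2 (Eventually.of_forall fun x => hne (g x))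

theorem ae_max_ne (c : ℝ) : ∀ᵐ s : ℝ × ℝ, max s.1 s.2 ≠ c := by
  filter_upwards [Measure.quasiMeasurePreserving_fst.ae (Measure.ae_ne volume c),
    Measure.quasiMeasurePreserving_snd.ae (Measure.ae_ne volume c)] with s h₁ h₂
  rcases max_choice s.1 s.2 with h | h <;> rwa [h]

theorem ae_integrableOn_fiber [SFinite μ] [SFinite ν] {R : Set (α × β)} {F : α × β → E}
    (hR : MeasurableSet R) (hF : IntegrableOn F R (μ.prod ν)) :
    ∀ᵐ x ∂μ, IntegrableOn (fun y => F (x, y)) (Prod.mk x ⁻¹' R) ν := by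
  filter_upwards [(hF.integrable_indicator hR).prod_right_ae] with x hx
  exact (integrable_indicator_iff (measurable_prodMk_left hR)).1 hx

variable [NormedSpace ℝ E]

theorem continuous_setIntegral_of_monotone (hmeas : ∀ t, MeasurableSet (S t)) (hmono : Monotone S)
    (hcont : ∀ t, ∀ᵐ x ∂μ, ∀ᶠ s in 𝓝 t, (x ∈ S s ↔ x ∈ S t)) (hf : ∀ t, IntegrableOn f (S t) μ) :
    Continuous fun t => ∫ x in S t, f x ∂μ := by
  have hind (t : ℝ) : Integrable ((S t).indicator f) μ := (hf t).integrable_indicator (hmeas t)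
  simp_rw [← integral_indicator (hmeas _)]
  refine continuous_iff_continuousAt.2 fun t => continuousAt_of_dominated
    (bound := fun x => ‖(S (t + 1)).indicator f x‖)
    (Eventually.of_forall fun s => (hind s).aestronglyMeasurable) ?_ (hind (t + 1)).norm ?_
  · filter_upwards [eventually_le_nhds (lt_add_one t)] with s hs
    exact Eventually.of_forall fun x => norm_indicator_le_of_subset (hmono hs) f x
  · filter_upwards [hcont t] with x hx
    refine continuousAt_const.congr (f := fun _ => (S t).indicator f x) ?_
    filter_upwards [hx] with s hs
    classical simp only [indicator_apply, hs]

theorem setIntegral_eq_two_smul_of_involutive {σ : α → α} {h : α → ℝ} (hσ : MeasurePreserving σ μ μ)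
    (hinv : Involutive σ) {A : Set α} (hA : σ ⁻¹' A = A) (hfσ : ∀ x, f (σ x) = f x)
    (hf : IntegrableOn f A μ) (hh : Measurable h) (hties : ∀ᵐ x ∂μ, h (σ x) ≠ h x) :
    ∫ x in A, f x ∂μ = (2 : ℝ) • ∫ x in A ∩ {x | h (σ x) ≤ h x}, f x ∂μ := by
  set B : Set α := {x | h (σ x) ≤ h x}
  have hB : MeasurableSet B := measurableSet_le (hh.comp hσ.measurable) hh
  have hσB : (σ ⁻¹' (A \ B) : Set α) =ᵐ[μ] (A ∩ B : Set α) := by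
    filter_upwards [hties] with x hx
    have hxA : σ x ∈ A ↔ x ∈ A := Set.ext_iff.1 hA x
    have hxB : σ x ∉ B ↔ x ∈ B := by
      simp only [B, mem_ofPred_eq, hinv x, not_le]
      exact ⟨le_of_lt, fun hle => lt_of_le_of_ne hle hx⟩
    exact propext (and_congr hxA hxB)
  have hswap : ∫ x in A \ B, f x ∂μ = ∫ x in A ∩ B, f x ∂μ :=
    calc ∫ x in A \ B, f x ∂μ = ∫ x in σ ⁻¹' (A \ B), f (σ x) ∂μ :=
          (hσ.setIntegral_preimage_emb
            (MeasurableEquiv.ofInvolutive σ hinv hσ.measurable).measurableEmbedding f _).symm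
      _ = ∫ x in A ∩ B, f x ∂μ := by simp only [hfσ, setIntegral_congr_set hσB]
  rw [← integral_inter_add_sdiff hB hf, hswap, two_smul]

theorem setIntegral_prod_eq_integral_fibers [SFinite μ] [SFinite ν] {R : Set (α × β)}
    {F : α × β → E} (hR : MeasurableSet R) (hF : IntegrableOn F R (μ.prod ν)) :
    ∫ p in R, F p ∂μ.prod ν = ∫ x, ∫ y in Prod.mk x ⁻¹' R, F (x, y) ∂ν ∂μ := by
  rw [← integral_indicator hR, integral_prod _ (hF.integrable_indicator hR)]
  refine integral_congr_ae (Eventually.of_forall fun x => ?_)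
  exact integral_indicator (f := fun y => F (x, y)) (measurable_prodMk_left hR)

end SetIntegral

section Kernel

theorem locallyIntegrable_abs_rpow {a : ℝ} (ha : -1 < a) :
    LocallyIntegrable (fun x : ℝ => |x| ^ a) := by
  refine locallyIntegrable_of_norm_le_rpow (C := 1) (α := -a) (by simp) (by simpa using by linarith)
    (Eventually.of_forall fun x => ?_) (Measurable.aestronglyMeasurable (by fun_prop))
  rw [neg_neg, one_mul, Real.norm_eq_abs, Real.norm_eq_abs, abs_of_nonneg (by positivity)]

theorem integrableOn_prod_comp_sub {G E : Type*} [AddGroup G] [TopologicalSpace G]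
    [IsTopologicalAddGroup G] [SecondCountableTopology G] [T2Space G] [MeasurableSpace G]
    [BorelSpace G] [NormedAddCommGroup E] [NormedSpace ℝ E] {μ : Measure G} [SFinite μ]
    [IsFiniteMeasureOnCompacts μ] [μ.IsAddRightInvariant] {k : G → E} (hk : LocallyIntegrable k μ)
    {s : Set G} (hs : IsCompact s) :
    IntegrableOn (fun p : G × G => k (p.1 - p.2)) (s ×ˢ s) (μ.prod μ) := by
  set D : Set G := (fun p : G × G => p.1 - p.2) '' s ×ˢ s
  have hD : IsCompact D := (hs.prod hs).image continuous_sub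
  have hone : Integrable (s.indicator fun _ => (1 : ℝ)) μ :=
    (integrableOn_const hs.measure_ne_top).integrable_indicator hs.measurableSet
  have hker : Integrable (D.indicator k) μ :=
    (hk.integrableOn_isCompact hD).integrable_indicator hD.measurableSet
  refine (hone.convolution_integrand (ContinuousLinearMap.lsmul ℝ ℝ) hker).integrableOn.congr_fun
    (fun p hp => ?_) (hs.measurableSet.prod hs.measurableSet)
  have hpD : p.1 - p.2 ∈ D := mem_image_of_mem _ hp
  simp [hp.2, hpD]

end Kernel

section Cubes

/-- The square `[0, t]²`; `square t ×ˢ square t` is the cube `[0, t]⁴` of points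
`((s₁, s₂), (u₁, u₂))`, grouped in pairs because the symmetries act on pairs. -/
def square (t : ℝ) : Set (ℝ × ℝ) := Icc 0 t ×ˢ Icc 0 t

/-- The cube `[0, t]³`, the domain of the lags of the smaller variables behind the largest one. -/
def cube₃ (t : ℝ) : Set (ℝ × ℝ × ℝ) := Icc 0 t ×ˢ Icc 0 t ×ˢ Icc 0 t

/-- The part of the cube `[0, T]⁴` where the first coordinate is the largest, written as the union
of its slices `{t} × [0, t]³`. -/
def pyramid (T : ℝ) : Set (ℝ × ℝ × ℝ × ℝ) := {p | p.1 ∈ Icc 0 T ∧ p.2 ∈ cube₃ p.1}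

theorem measurableSet_cube₃ (t : ℝ) : MeasurableSet (cube₃ t) :=
  measurableSet_Icc.prod (measurableSet_Icc.prod measurableSet_Icc)

theorem monotone_cube₃ : Monotone cube₃ := fun _ _ hst =>
  prod_mono (Icc_subset_Icc_right hst)
    (prod_mono (Icc_subset_Icc_right hst) (Icc_subset_Icc_right hst))

theorem ae_eventually_mem_cube₃_iff (t : ℝ) :
    ∀ᵐ x, ∀ᶠ s in 𝓝 t, (x ∈ cube₃ s ↔ x ∈ cube₃ t) :=
  have h := ae_eventually_mem_Icc_iff 0 t
  ae_eventually_mem_prod_iff h (ae_eventually_mem_prod_iff h h)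

theorem preimage_diag_sub_cube₃ (t : ℝ) : (fun x => (t, t, t) - x) ⁻¹' cube₃ t = cube₃ t := by
  ext x
  simp only [cube₃, mem_preimage, mem_prod, mem_Icc, Prod.fst_sub, Prod.snd_sub, sub_nonneg,
    sub_le_self_iff, and_comm]

theorem measurePreserving_diag_sub (t : ℝ) :
    MeasurePreserving (fun x : ℝ × ℝ × ℝ => (t, t, t) - x) :=
  have h := Measure.measurePreserving_sub_left (volume : Measure ℝ) t
  h.prod (h.prod h)

theorem measurableEmbedding_diag_sub (t : ℝ) :
    MeasurableEmbedding (fun x : ℝ × ℝ × ℝ => (t, t, t) - x) :=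
  (MeasurableEquiv.subLeft (t, t, t)).measurableEmbedding

theorem preimage_mk_pyramid_of_mem {t T : ℝ} (ht : t ∈ Icc 0 T) :
    Prod.mk t ⁻¹' pyramid T = cube₃ t := by
  ext y
  exact and_iff_right ht

theorem preimage_mk_pyramid_of_notMem {t T : ℝ} (ht : t ∉ Icc 0 T) :
    Prod.mk t ⁻¹' pyramid T = ∅ :=
  eq_empty_of_forall_notMem fun _ hy => ht hy.1

theorem measurableSet_pyramid (T : ℝ) : MeasurableSet (pyramid T) := by
  simp only [pyramid, cube₃, mem_prod, mem_Icc]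
  measurability

theorem preimage_prodAssoc_pyramid (T : ℝ) :
    (MeasurableEquiv.prodAssoc : (ℝ × ℝ) × (ℝ × ℝ) ≃ᵐ _) ⁻¹' pyramid T =
      (square T ×ˢ square T) ∩ {p | max p.2.1 p.2.2 ≤ max p.1.1 p.1.2} ∩ {p | p.1.2 ≤ p.1.1} := by
  ext ⟨⟨s₁, s₂⟩, u₁, u₂⟩
  change ((0 ≤ s₁ ∧ s₁ ≤ T) ∧ (0 ≤ s₂ ∧ s₂ ≤ s₁) ∧ (0 ≤ u₁ ∧ u₁ ≤ s₁) ∧ 0 ≤ u₂ ∧ u₂ ≤ s₁) ↔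
    ((((0 ≤ s₁ ∧ s₁ ≤ T) ∧ 0 ≤ s₂ ∧ s₂ ≤ T) ∧ (0 ≤ u₁ ∧ u₁ ≤ T) ∧ 0 ≤ u₂ ∧ u₂ ≤ T) ∧
      max u₁ u₂ ≤ max s₁ s₂) ∧ s₂ ≤ s₁
  grind

theorem preimage_map_swap_inter_max_le (T : ℝ) :
    Prod.map Prod.swap Prod.swap ⁻¹'
        ((square T ×ˢ square T) ∩ {p | max p.2.1 p.2.2 ≤ max p.1.1 p.1.2}) =
      (square T ×ˢ square T) ∩ {p | max p.2.1 p.2.2 ≤ max p.1.1 p.1.2} := by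
  ext p
  simp only [square, mem_preimage, mem_inter_iff, mem_prod, mem_ofPred_eq, Prod.map_fst,
    Prod.map_snd, Prod.fst_swap, Prod.snd_swap, max_comm p.1.2 p.1.1, max_comm p.2.2 p.2.1]
  tauto

theorem apply_diag_sub_eq {E : Type*} {F : ℝ × ℝ × ℝ × ℝ → E}
    (htrans : ∀ c p, F (p + (c, c, c, c)) = F p) (t : ℝ) (x : ℝ × ℝ × ℝ) :
    F (t, (t, t, t) - x) = F (0, -x) := by
  rw [← htrans t (0, -x)]
  congr 1
  ext <;> simp [sub_eq_neg_add]

variable {E : Type*} [NormedAddCommGroup E]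

theorem integrableOn_cube₃_lag {F : ℝ × ℝ × ℝ × ℝ → E}
    (htrans : ∀ c p, F (p + (c, c, c, c)) = F p) (hF : ∀ T, IntegrableOn F (pyramid T)) (T : ℝ) :
    IntegrableOn (fun x => F (0, -x)) (cube₃ T) := by
  -- Almost every slice of a larger pyramid is integrable, hence some slice at a height above `|T|`.
  have hae : ∀ᵐ t ∂volume.restrict (Ioo |T| (|T| + 1)),
      IntegrableOn (fun y => F (t, y)) (Prod.mk t ⁻¹' pyramid (|T| + 1)) :=
    ae_restrict_of_ae (ae_integrableOn_fiber (measurableSet_pyramid _) (hF _))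
  have : (ae (volume.restrict (Ioo |T| (|T| + 1)))).NeBot :=
    ae_restrict_neBot.2 (by simp)
  obtain ⟨t, htF, htT⟩ := (hae.and (ae_restrict_mem measurableSet_Ioo)).exists
  rw [preimage_mk_pyramid_of_mem ⟨(abs_nonneg T).trans htT.1.le, htT.2.le⟩,
    ← (measurePreserving_diag_sub t).integrableOn_comp_preimage (measurableEmbedding_diag_sub t),
    preimage_diag_sub_cube₃] at htF
  simp only [comp_def, apply_diag_sub_eq htrans] at htF
  exact htF.mono_set (monotone_cube₃ ((le_abs_self T).trans htT.1.le))

variable [NormedSpace ℝ E] {T : ℝ}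

theorem setIntegral_pyramid_eq_integral_slices {F : ℝ × ℝ × ℝ × ℝ → E}
    (hF : IntegrableOn F (pyramid T)) :
    ∫ p in pyramid T, F p = ∫ t in Icc 0 T, ∫ y in cube₃ t, F (t, y) := by
  refine (setIntegral_prod_eq_integral_fibers (measurableSet_pyramid T) hF).trans ?_
  rw [← integral_indicator measurableSet_Icc]
  refine integral_congr_ae (Eventually.of_forall fun t => ?_)
  by_cases ht : t ∈ Icc 0 T
  · simp only [indicator_of_mem ht, preimage_mk_pyramid_of_mem ht]
  · simp only [indicator_of_notMem ht, preimage_mk_pyramid_of_notMem ht, setIntegral_empty]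

theorem hasDerivAt_setIntegral_pyramid [CompleteSpace E] {F : ℝ × ℝ × ℝ × ℝ → E}
    (htrans : ∀ c p, F (p + (c, c, c, c)) = F p) (hF : ∀ T, IntegrableOn F (pyramid T))
    (hT : 0 < T) :
    HasDerivAt (fun T => ∫ p in pyramid T, F p) (∫ x in cube₃ T, F (0, -x)) T := by
  have hslice (t : ℝ) : ∫ y in cube₃ t, F (t, y) = ∫ x in cube₃ t, F (0, -x) := by
    rw [← (measurePreserving_diag_sub t).setIntegral_preimage_emb (measurableEmbedding_diag_sub t),
      preimage_diag_sub_cube₃]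
    simp only [apply_diag_sub_eq htrans]
  have hcont : Continuous fun t => ∫ x in cube₃ t, F (0, -x) :=
    continuous_setIntegral_of_monotone measurableSet_cube₃ monotone_cube₃
      ae_eventually_mem_cube₃_iff (integrableOn_cube₃_lag htrans hF)
  refine (hcont.integral_hasStrictDerivAt 0 T).hasDerivAt.congr_of_eventuallyEq ?_
  filter_upwards [eventually_gt_nhds hT] with t ht
  rw [setIntegral_pyramid_eq_integral_slices (hF t), intervalIntegral.integral_of_le ht.le,
    integral_Icc_eq_integral_Ioc]
  simp only [hslice]

theorem setIntegral_cube_eq_four_smul_setIntegral_pyramid {F : (ℝ × ℝ) × (ℝ × ℝ) → E}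
    (hswap : ∀ p, F p.swap = F p) (hrefl : ∀ p, F (Prod.map Prod.swap Prod.swap p) = F p)
    (hF : IntegrableOn F (square T ×ˢ square T)) :
    ∫ p in square T ×ˢ square T, F p =
      (4 : ℝ) • ∫ p in pyramid T, F (MeasurableEquiv.prodAssoc.symm p) := by
  have hties : ∀ᵐ s : ℝ × ℝ, s.2 ≠ s.1 :=
    ae_prod_ne_of_forall_ae_ne measurable_id measurable_id (Measure.ae_ne volume)
  have hflip : MeasurePreserving (Prod.swap : ℝ × ℝ → ℝ × ℝ) volume volume :=
    Measure.measurePreserving_swap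
  have hpairs : ∫ p in square T ×ˢ square T, F p = (2 : ℝ) •
      ∫ p in (square T ×ˢ square T) ∩ {p | max p.2.1 p.2.2 ≤ max p.1.1 p.1.2}, F p :=
    setIntegral_eq_two_smul_of_involutive (h := fun p => max p.1.1 p.1.2)
      Measure.measurePreserving_swap Prod.swap_swap (preimage_swap_prod _ _) hswap hF (by fun_prop)
      (ae_prod_ne_of_forall_ae_ne (measurable_fst.max measurable_snd)
        (measurable_fst.max measurable_snd) ae_max_ne)
  have hcoords : ∫ p in (square T ×ˢ square T) ∩ {p | max p.2.1 p.2.2 ≤ max p.1.1 p.1.2}, F p =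
      (2 : ℝ) • ∫ p in (square T ×ˢ square T) ∩ {p | max p.2.1 p.2.2 ≤ max p.1.1 p.1.2} ∩
        {p | p.1.2 ≤ p.1.1}, F p :=
    setIntegral_eq_two_smul_of_involutive (h := fun p => p.1.1) (hflip.prod hflip)
      (Prod.map_involutive.2 ⟨Prod.swap_swap, Prod.swap_swap⟩)
      (preimage_map_swap_inter_max_le T) hrefl (hF.mono_set inter_subset_left)
      (measurable_fst.comp measurable_fst) (Measure.quasiMeasurePreserving_fst.ae hties)
  have hassoc : ∫ p in (MeasurableEquiv.prodAssoc : (ℝ × ℝ) × (ℝ × ℝ) ≃ᵐ _) ⁻¹' pyramid T, F p =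
      ∫ p in pyramid T, F (MeasurableEquiv.prodAssoc.symm p) := by
    simpa only [MeasurableEquiv.symm_apply_apply] using
      volume_preserving_prodAssoc.setIntegral_preimage_emb
        MeasurableEquiv.prodAssoc.measurableEmbedding
        (fun p => F (MeasurableEquiv.prodAssoc.symm p)) (pyramid T)
  rw [hpairs, hcoords, ← preimage_prodAssoc_pyramid, hassoc, smul_smul]
  norm_num

theorem hasDerivAt_setIntegral_cube [CompleteSpace E] {F : (ℝ × ℝ) × (ℝ × ℝ) → E}
    (htrans : ∀ c p, F (p + ((c, c), (c, c))) = F p) (hswap : ∀ p, F p.swap = F p)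
    (hrefl : ∀ p, F (Prod.map Prod.swap Prod.swap p) = F p)
    (hF : ∀ T, IntegrableOn F (square T ×ˢ square T)) (hT : 0 < T) :
    HasDerivAt (fun T => ∫ p in square T ×ˢ square T, F p)
      ((4 : ℝ) • ∫ x in cube₃ T, F ((0, -x.1), (-x.2.1, -x.2.2))) T := by
  have hpyr (t : ℝ) : IntegrableOn (F ∘ MeasurableEquiv.prodAssoc.symm) (pyramid t) := by
    rw [← volume_preserving_prodAssoc.integrableOn_comp_preimage
      MeasurableEquiv.prodAssoc.measurableEmbedding, preimage_prodAssoc_pyramid]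
    exact (hF t).mono_set (inter_subset_left.trans inter_subset_left)
  have hquarter : (fun t => ∫ p in square t ×ˢ square t, F p) =
      fun t => (4 : ℝ) • ∫ p in pyramid t, F (MeasurableEquiv.prodAssoc.symm p) :=
    funext fun t => setIntegral_cube_eq_four_smul_setIntegral_pyramid hswap hrefl (hF t)
  rw [hquarter]
  exact (hasDerivAt_setIntegral_pyramid (fun c p => htrans c (MeasurableEquiv.prodAssoc.symm p))
    hpyr hT).const_smul (4 : ℝ)

end Cubes

section CycleKernel

/-- The integrand of `I(T)`, with exponent `a` in place of `2H - 2`,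
at `p = ((s₁, s₂), (u₁, u₂))`. -/
noncomputable def cycleKernel (a θ : ℝ) (p : (ℝ × ℝ) × (ℝ × ℝ)) : ℝ :=
  exp (-θ * |p.1.2 - p.2.2| - θ * |p.1.1 - p.2.1|) * |p.1.2 - p.1.1| ^ a * |p.2.2 - p.2.1| ^ a

variable (a θ : ℝ)

theorem cycleKernel_add_diag (c : ℝ) (p : (ℝ × ℝ) × (ℝ × ℝ)) :
    cycleKernel a θ (p + ((c, c), (c, c))) = cycleKernel a θ p := by
  simp only [cycleKernel, Prod.fst_add, Prod.snd_add, add_sub_add_right_eq_sub]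

theorem cycleKernel_swap (p : (ℝ × ℝ) × (ℝ × ℝ)) :
    cycleKernel a θ p.swap = cycleKernel a θ p := by
  simp only [cycleKernel, Prod.fst_swap, Prod.snd_swap, abs_sub_comm p.2.1 p.1.1,
    abs_sub_comm p.2.2 p.1.2]
  ring

theorem cycleKernel_map_swap (p : (ℝ × ℝ) × (ℝ × ℝ)) :
    cycleKernel a θ (Prod.map Prod.swap Prod.swap p) = cycleKernel a θ p := by
  simp only [cycleKernel, Prod.map_fst, Prod.map_snd, Prod.fst_swap, Prod.snd_swap,
    abs_sub_comm p.1.1 p.1.2, abs_sub_comm p.2.1 p.2.2]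
  ring_nf

variable {a}

theorem integrableOn_cycleKernel (ha : -1 < a) (T : ℝ) :
    IntegrableOn (cycleKernel a θ) (square T ×ˢ square T) := by
  have hsquare : IntegrableOn (fun s : ℝ × ℝ => |s.1 - s.2| ^ a) (square T) :=
    integrableOn_prod_comp_sub (locallyIntegrable_abs_rpow ha) isCompact_Icc
  have hprod : IntegrableOn
      (fun p : (ℝ × ℝ) × (ℝ × ℝ) => |p.1.1 - p.1.2| ^ a * |p.2.1 - p.2.2| ^ a)
      (square T ×ˢ square T) := by
    have := Integrable.mul_prod hsquare hsquare
    rwa [Measure.prod_restrict] at this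
  have hcompact : IsCompact (square T ×ˢ square T) :=
    (isCompact_Icc.prod isCompact_Icc).prod (isCompact_Icc.prod isCompact_Icc)
  have hexp : Continuous fun p : (ℝ × ℝ) × (ℝ × ℝ) =>
      exp (-θ * |p.1.2 - p.2.2| - θ * |p.1.1 - p.2.1|) := by fun_prop
  refine (hprod.continuousOn_mul hexp.continuousOn hcompact).congr_fun (fun p _ => ?_)
    hcompact.measurableSet
  simp only [cycleKernel, abs_sub_comm p.1.1 p.1.2, abs_sub_comm p.2.1 p.2.2, mul_assoc]

variable (a)

theorem setIntegral_cycleKernel_prodAssoc (T : ℝ) :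
    ∫ p in Icc 0 T ×ˢ Icc 0 T ×ˢ Icc 0 T ×ˢ Icc 0 T,
        exp (-θ * |p.2.1 - p.2.2.2| - θ * |p.1 - p.2.2.1|) * |p.2.1 - p.1| ^ a *
          |p.2.2.2 - p.2.2.1| ^ a =
      ∫ p in square T ×ˢ square T, cycleKernel a θ p := by
  rw [← volume_preserving_prodAssoc.setIntegral_preimage_emb
    MeasurableEquiv.prodAssoc.measurableEmbedding]
  congr 2
  ext p
  exact and_assoc.symm

theorem measurePreserving_rotate :
    MeasurePreserving (fun x : ℝ × ℝ × ℝ => (x.2.2, x.1, x.2.1)) :=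
  MeasurePreserving.comp (Measure.measurePreserving_swap (μ := (volume : Measure (ℝ × ℝ)))
    (ν := (volume : Measure ℝ))) (volume_preserving_prodAssoc.symm MeasurableEquiv.prodAssoc)

theorem setIntegral_cycleKernel_lag (T : ℝ) :
    ∫ x in cube₃ T, cycleKernel a θ ((0, -x.1), (-x.2.1, -x.2.2)) =
      ∫ x in cube₃ T,
        exp (-θ * x.1 - θ * |x.2.1 - x.2.2|) * x.2.2 ^ a * |x.1 - x.2.1| ^ a := by
  have hemb : MeasurableEmbedding fun x : ℝ × ℝ × ℝ => (x.2.2, x.1, x.2.1) :=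
    (MeasurableEquiv.prodAssoc.symm.trans MeasurableEquiv.prodComm).measurableEmbedding
  have hrotate : (fun x : ℝ × ℝ × ℝ => (x.2.2, x.1, x.2.1)) ⁻¹' cube₃ T = cube₃ T := by
    ext x
    simp only [cube₃, mem_preimage, mem_prod, and_comm, and_assoc]
  rw [← measurePreserving_rotate.setIntegral_preimage_emb hemb, hrotate]
  refine setIntegral_congr_fun (measurableSet_cube₃ T) fun x hx => ?_
  simp only [cycleKernel, sub_neg_eq_add, zero_add, sub_zero, abs_neg,
    abs_of_nonneg hx.1.1, abs_of_nonneg hx.2.2.1]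
  ring_nf

end CycleKernel

theorem stmt_14_general {a : ℝ} (ha : -1 < a) (θ : ℝ) {T : ℝ} (hT : 0 < T) :
    HasDerivAt (fun T : ℝ =>
      ∫ p in Icc 0 T ×ˢ Icc 0 T ×ˢ Icc 0 T ×ˢ Icc 0 T,
        exp (-θ * |p.2.1 - p.2.2.2| - θ * |p.1 - p.2.2.1|) *
          |p.2.1 - p.1| ^ a * |p.2.2.2 - p.2.2.1| ^ a)
      (4 * ∫ p in Icc 0 T ×ˢ Icc 0 T ×ˢ Icc 0 T,
        exp (-θ * p.1 - θ * |p.2.1 - p.2.2|) * p.2.2 ^ a * |p.1 - p.2.1| ^ a) T := by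
  have hderiv := hasDerivAt_setIntegral_cube (cycleKernel_add_diag a θ) (cycleKernel_swap a θ)
    (cycleKernel_map_swap a θ) (integrableOn_cycleKernel θ ha) hT
  rw [setIntegral_cycleKernel_lag, smul_eq_mul] at hderiv
  simp only [setIntegral_cycleKernel_prodAssoc]
  exact hderiv

theorem stmt_14 (H θ : ℝ) (h1 : 1/2 < H) (h2 : H < 3/4) (hθ : 0 < θ) :
    ∀ T : ℝ, 0 < T →
      HasDerivAt (fun T : ℝ =>
        ∫ p in (Icc (0:ℝ) T) ×ˢ (Icc (0:ℝ) T) ×ˢ (Icc (0:ℝ) T) ×ˢ (Icc (0:ℝ) T),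
          Real.exp (-θ * |p.2.1 - p.2.2.2| - θ * |p.1 - p.2.2.1|) *
            |p.2.1 - p.1| ^ (2*H - 2) * |p.2.2.2 - p.2.2.1| ^ (2*H - 2))
        (4 * ∫ p in (Icc (0:ℝ) T) ×ˢ (Icc (0:ℝ) T) ×ˢ (Icc (0:ℝ) T),
          Real.exp (-θ * p.1 - θ * |p.2.1 - p.2.2|) *
            p.2.2 ^ (2*H - 2) * |p.1 - p.2.1| ^ (2*H - 2))
        T :=
  fun _ hT => stmt_14_general (by linarith) θ hT
end

section
/- Let 1/2 < H < 3/4 and θ > 0. Then the function (a,b,c) ↦ e^{-θ(a+c)} (a+b)^{2H-2} (b+c)^{2H-2} is Lebesgue integrable on [0,∞)³, i.e. ∫_{[0,∞)³} e^{-θ(a+c)} (a+b)^{2H-2} (b+c)^{2H-2} da db dc < ∞. -/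
open MeasureTheory Real Set

/-!
For `a, b > 0` and `p, q ≤ 0` one has `(a + b) ^ (p + q) ≤ a ^ p * b ^ q`, so the integrand is
dominated by products of functions of one variable, with freedom in how the exponent
`s = 2H - 2` is distributed. For `b ≤ 1` the split `s = 2s/3 + s/3` produces `a ^ (2s/3)`,
`b ^ (2s/3)` and `c ^ (2s/3)`, all integrable at `0` as soon as `s > -3/2`. For `b > 1` the split
`s = 0 + s` leaves `b ^ (2s)`, integrable at infinity because `s < -1/2`. The exponential weights
control `a` and `c` at infinity.
-/

lemma add_rpow_add_le_rpow_mul_rpow {a b p q : ℝ} (ha : 0 < a) (hb : 0 < b) (hp : p ≤ 0)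
    (hq : q ≤ 0) : (a + b) ^ (p + q) ≤ a ^ p * b ^ q := by
  rw [rpow_add (add_pos ha hb)]
  exact mul_le_mul (rpow_le_rpow_of_nonpos ha (le_add_of_nonneg_right hb.le) hp)
    (rpow_le_rpow_of_nonpos hb (le_add_of_nonneg_left ha.le) hq) (by positivity) (by positivity)

lemma integrableOn_mul_add_rpow_add_mul_add_rpow_add {f g : ℝ → ℝ} {B : Set ℝ} {p q p' q' : ℝ}
    (hB : MeasurableSet B) (hB₀ : B ⊆ Ioi 0)
    (hp : p ≤ 0) (hq : q ≤ 0) (hp' : p' ≤ 0) (hq' : q' ≤ 0)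
    (hf : AEStronglyMeasurable f (volume.restrict (Ioi 0)))
    (hg : AEStronglyMeasurable g (volume.restrict (Ioi 0)))
    (hfp : IntegrableOn (fun a ↦ f a * a ^ p) (Ioi 0))
    (hBq : IntegrableOn (fun b ↦ b ^ (q + q')) B)
    (hgp : IntegrableOn (fun c ↦ g c * c ^ p') (Ioi 0)) :
    IntegrableOn (fun x : ℝ × ℝ × ℝ ↦
      f x.1 * g x.2.2 * (x.1 + x.2.1) ^ (p + q) * (x.2.1 + x.2.2) ^ (p' + q'))
      (Ioi 0 ×ˢ B ×ˢ Ioi 0) := by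
  have hprod : (volume : Measure (ℝ × ℝ × ℝ)).restrict (Ioi 0 ×ˢ B ×ˢ Ioi 0) =
      (volume.restrict (Ioi 0)).prod ((volume.restrict B).prod (volume.restrict (Ioi 0))) := by
    simp only [Measure.volume_eq_prod, Measure.prod_restrict]
  have hmeas : AEStronglyMeasurable (fun x : ℝ × ℝ × ℝ ↦
      f x.1 * g x.2.2 * (x.1 + x.2.1) ^ (p + q) * (x.2.1 + x.2.2) ^ (p' + q'))
      (volume.restrict (Ioi 0 ×ˢ B ×ˢ Ioi 0)) := by
    rw [hprod]
    exact ((hf.comp_fst.mul hg.comp_snd.comp_snd).mul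
      (Measurable.aestronglyMeasurable (by fun_prop))).mul
      (Measurable.aestronglyMeasurable (by fun_prop))
  have hdom : IntegrableOn (fun x : ℝ × ℝ × ℝ ↦
      f x.1 * x.1 ^ p * (x.2.1 ^ (q + q') * (g x.2.2 * x.2.2 ^ p'))) (Ioi 0 ×ˢ B ×ˢ Ioi 0) := by
    rw [IntegrableOn, hprod]
    exact hfp.mul_prod (hBq.mul_prod hgp)
  refine Integrable.mono hdom hmeas ((ae_restrict_iff'
    (measurableSet_Ioi.prod (hB.prod measurableSet_Ioi))).2 (.of_forall ?_))
  rintro ⟨a, b, c⟩ ⟨ha : 0 < a, hbB, hc : 0 < c⟩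
  have hb : 0 < b := hB₀ hbB
  have hab : (a + b) ^ (p + q) ≤ a ^ p * b ^ q := add_rpow_add_le_rpow_mul_rpow ha hb hp hq
  have hbc : (b + c) ^ (p' + q') ≤ c ^ p' * b ^ q' :=
    add_comm c b ▸ add_rpow_add_le_rpow_mul_rpow hc hb hp' hq'
  simp only [norm_mul, norm_of_nonneg, rpow_nonneg, (add_pos ha hb).le, (add_pos hb hc).le,
    ha.le, hb.le, hc.le]
  calc
    ‖f a‖ * ‖g c‖ * (a + b) ^ (p + q) * (b + c) ^ (p' + q')
      ≤ ‖f a‖ * ‖g c‖ * (a ^ p * b ^ q) * (c ^ p' * b ^ q') := by gcongr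
    _ = ‖f a‖ * a ^ p * (b ^ (q + q') * (‖g c‖ * c ^ p')) := by
        rw [rpow_add hb]
        ring

lemma integrableOn_Ioi_mul_add_rpow_mul_add_rpow {f g : ℝ → ℝ} {s : ℝ} (hs : -3 / 2 < s)
    (hs' : s < -1 / 2) (hf : IntegrableOn f (Ioi 0)) (hg : IntegrableOn g (Ioi 0))
    (hfs : IntegrableOn (fun a ↦ f a * a ^ (2 * s / 3)) (Ioi 0))
    (hgs : IntegrableOn (fun c ↦ g c * c ^ (2 * s / 3)) (Ioi 0)) :
    IntegrableOn (fun x : ℝ × ℝ × ℝ ↦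
      f x.1 * g x.2.2 * (x.1 + x.2.1) ^ s * (x.2.1 + x.2.2) ^ s)
      (Ioi 0 ×ˢ Ioi 0 ×ˢ Ioi 0) := by
  have hpow_Ioc : IntegrableOn (fun b : ℝ ↦ b ^ (s / 3 + s / 3)) (Ioc 0 1) :=
    (intervalIntegrable_iff_integrableOn_Ioc_of_le zero_le_one).1
      (intervalIntegral.intervalIntegrable_rpow' (by linarith))
  have hpow_Ioi : IntegrableOn (fun b : ℝ ↦ b ^ (s + s)) (Ioi 1) :=
    integrableOn_Ioi_rpow_of_lt (by linarith) one_pos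
  have hsplit : 2 * s / 3 + s / 3 = s := by ring
  have hIoc : IntegrableOn (fun x : ℝ × ℝ × ℝ ↦
      f x.1 * g x.2.2 * (x.1 + x.2.1) ^ s * (x.2.1 + x.2.2) ^ s)
      (Ioi 0 ×ˢ Ioc 0 1 ×ˢ Ioi 0) := by
    simpa only [hsplit] using integrableOn_mul_add_rpow_add_mul_add_rpow_add measurableSet_Ioc
      Ioc_subset_Ioi_self (by linarith) (by linarith) (by linarith) (by linarith)
      hf.aestronglyMeasurable hg.aestronglyMeasurable hfs hpow_Ioc hgs
  have hIoi : IntegrableOn (fun x : ℝ × ℝ × ℝ ↦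
      f x.1 * g x.2.2 * (x.1 + x.2.1) ^ s * (x.2.1 + x.2.2) ^ s)
      (Ioi 0 ×ˢ Ioi 1 ×ˢ Ioi 0) := by
    simpa only [zero_add] using integrableOn_mul_add_rpow_add_mul_add_rpow_add measurableSet_Ioi
      (Ioi_subset_Ioi zero_le_one) le_rfl (by linarith) le_rfl (by linarith)
      hf.aestronglyMeasurable hg.aestronglyMeasurable
      (by simpa only [rpow_zero, mul_one] using hf) hpow_Ioi
      (by simpa only [rpow_zero, mul_one] using hg)
  simpa only [← prod_union, ← union_prod, Ioc_union_Ioi_eq_Ioi zero_le_one] using hIoc.union hIoi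

lemma integrableOn_exp_neg_mul_mul_rpow {θ p : ℝ} (hθ : 0 < θ) (hp : -1 < p) :
    IntegrableOn (fun a ↦ exp (-θ * a) * a ^ p) (Ioi 0) := by
  simpa only [rpow_one, mul_comm (exp _)] using
    integrableOn_rpow_mul_exp_neg_mul_rpow hp one_pos hθ

lemma Ici_prod_Ici_prod_Ici_ae_eq (a b c : ℝ) :
    (Ici a ×ˢ Ici b ×ˢ Ici c : Set (ℝ × ℝ × ℝ)) =ᵐ[volume] Ioi a ×ˢ Ioi b ×ˢ Ioi c :=
  Measure.set_prod_ae_eq Ioi_ae_eq_Ici.symm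
    (Measure.set_prod_ae_eq Ioi_ae_eq_Ici.symm Ioi_ae_eq_Ici.symm)

theorem stmt_15_general (H θ : ℝ) (h1 : 1 / 4 < H) (h2 : H < 3 / 4) (hθ : 0 < θ) :
    IntegrableOn (fun p : ℝ × ℝ × ℝ ↦
      Real.exp (-θ * (p.1 + p.2.2)) * (p.1 + p.2.1) ^ (2 * H - 2) *
        (p.2.1 + p.2.2) ^ (2 * H - 2))
      ((Ici (0 : ℝ)) ×ˢ (Ici (0 : ℝ)) ×ˢ (Ici (0 : ℝ))) := by
  have hexp : IntegrableOn (fun a ↦ exp (-θ * a)) (Ioi 0) := exp_neg_integrableOn_Ioi 0 hθ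
  have hexp_rpow : IntegrableOn (fun a ↦ exp (-θ * a) * a ^ (2 * (2 * H - 2) / 3)) (Ioi 0) :=
    integrableOn_exp_neg_mul_mul_rpow hθ (by linarith)
  refine IntegrableOn.congr_set_ae ?_ (Ici_prod_Ici_prod_Ici_ae_eq 0 0 0)
  simpa only [mul_add, exp_add] using integrableOn_Ioi_mul_add_rpow_mul_add_rpow
    (by linarith) (by linarith) hexp hexp hexp_rpow hexp_rpow

theorem stmt_15 (H θ : ℝ) (h1 : 1/2 < H) (h2 : H < 3/4) (hθ : 0 < θ) :
    IntegrableOn (fun p : ℝ × ℝ × ℝ =>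
      Real.exp (-θ * (p.1 + p.2.2)) * (p.1 + p.2.1) ^ (2*H - 2) *
        (p.2.1 + p.2.2) ^ (2*H - 2))
      ((Ici (0:ℝ)) ×ˢ (Ici (0:ℝ)) ×ˢ (Ici (0:ℝ))) :=
  stmt_15_general H θ (by linarith) h2 hθ
end

section
/- Let 1/2 < H < 1 and θ > 0, and set α_H = H(2H-1). Define A(t) = α_H ∫₀^t ∫_v^∞ e^{-θx + 2θv} x^{2H-2} dx dv for t ≥ 0. Then, as t → 0⁺, A(t) = θ^{1-2H} H Γ(2H) · t − (1/2) t^{2H} + o(t^{2H}); that is, the function t ↦ A(t) − θ^{1-2H} H Γ(2H) t + (1/2) t^{2H} is o(t^{2H}) as t → 0⁺. -/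
open MeasureTheory Real Set Filter

/-! Write `s = 2H` and `T s v = ∫_v^∞ x^(s-1) e^(-θx) dx`. Integrating by parts,
`(s - 1) T (s - 1) v = θ T s v - v^(s-1) e^(-θv)`, whose right-hand side is integrable down to
`v = 0` for every `s > 0`. Moreover `T s v = T s 0 + O(v^s)` with `T s 0 = θ^(-s) Γ(s)`. Hence
`(s - 1) e^(2θv) T (s - 1) v = θ^(1-s) Γ(s) - v^(s-1) + o(v^(s-1))` as long as `s < 2`, and
integrating this expansion over `(0, t)` and multiplying by `H` gives the claim.
-/

open Asymptotics
open scoped Topology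

section PowersNearZero

variable {E : Type*} [NormedAddCommGroup E] [NormedSpace ℝ E] {f : ℝ → E} {a b c p : ℝ}

theorem isLittleO_rpow_rpow_nhdsGT_zero (hab : a < b) :
    (fun x : ℝ => x ^ b) =o[𝓝[>] 0] fun x => x ^ a := by
  have hlim : Tendsto (fun x : ℝ => x ^ (b - a)) (𝓝[>] 0) (𝓝 0) := by
    have hcont := (continuousAt_rpow_const 0 (b - a) (Or.inr (sub_nonneg.2 hab.le))).tendsto
    rw [zero_rpow (sub_ne_zero.2 hab.ne')] at hcont
    exact hcont.mono_left nhdsWithin_le_nhds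
  refine isLittleO_of_tendsto' ?_ (hlim.congr' ?_)
  · filter_upwards [self_mem_nhdsWithin] with x (hx : 0 < x) h
    exact absurd h (rpow_pos_of_pos hx a).ne'
  · filter_upwards [self_mem_nhdsWithin] with x (hx : 0 < x)
    exact rpow_sub hx b a

theorem integral_zero_rpow (hp : -1 < p) (t : ℝ) :
    ∫ x in (0 : ℝ)..t, x ^ p = t ^ (p + 1) / (p + 1) := by
  rw [integral_rpow (Or.inl hp), zero_rpow (by linarith), sub_zero]

theorem isBigOWith_integral_rpow (hp : -1 < p)
    (hf : IsBigOWith c (𝓝[>] 0) f fun x => x ^ p) :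
    IsBigOWith (c / (p + 1)) (𝓝[>] 0) (fun t => ∫ x in (0 : ℝ)..t, f x) fun t => t ^ (p + 1) := by
  obtain ⟨δ, hδ, hbound⟩ := mem_nhdsGT_iff_exists_Ioo_subset.1 hf.bound
  refine IsBigOWith.of_bound ?_
  filter_upwards [Ioo_mem_nhdsGT hδ] with t ht
  have hintegrable : IntervalIntegrable (fun x : ℝ => c * x ^ p) volume 0 t :=
    (intervalIntegral.intervalIntegrable_rpow' hp).const_mul c
  have hle : ∀ x ∈ Ioc 0 t, ‖f x‖ ≤ c * x ^ p := fun x hx => by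
    have hfx : ‖f x‖ ≤ c * ‖x ^ p‖ := hbound ⟨hx.1, hx.2.trans_lt ht.2⟩
    rwa [norm_of_nonneg (rpow_nonneg hx.1.le p)] at hfx
  calc ‖∫ x in (0 : ℝ)..t, f x‖
      ≤ ∫ x in (0 : ℝ)..t, c * x ^ p :=
        intervalIntegral.norm_integral_le_of_norm_le ht.1.le (ae_of_all _ hle) hintegrable
    _ = c / (p + 1) * ‖t ^ (p + 1)‖ := by
        rw [intervalIntegral.integral_const_mul, integral_zero_rpow hp,
          norm_of_nonneg (rpow_nonneg ht.1.le _)]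
        ring

theorem isBigO_integral_rpow (hp : -1 < p) (hf : f =O[𝓝[>] 0] fun x => x ^ p) :
    (fun t => ∫ x in (0 : ℝ)..t, f x) =O[𝓝[>] 0] fun t => t ^ (p + 1) := by
  obtain ⟨c, hc⟩ := hf.isBigOWith
  exact (isBigOWith_integral_rpow hp hc).isBigO

theorem isLittleO_integral_rpow (hp : -1 < p) (hf : f =o[𝓝[>] 0] fun x => x ^ p) :
    (fun t => ∫ x in (0 : ℝ)..t, f x) =o[𝓝[>] 0] fun t => t ^ (p + 1) := by
  have hp' : 0 < p + 1 := by linarith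
  refine IsLittleO.of_isBigOWith fun c hc => ?_
  have h := isBigOWith_integral_rpow hp (hf.forall_isBigOWith (mul_pos hc hp'))
  rwa [mul_div_cancel_right₀ c hp'.ne'] at h

end PowersNearZero

theorem isBigO_exp_mul_one_nhds_zero (c : ℝ) :
    (fun v : ℝ => exp (c * v)) =O[𝓝 0] fun _ => (1 : ℝ) :=
  ((by fun_prop : Continuous fun v : ℝ => exp (c * v)).tendsto 0).isBigO_one ℝ

theorem isBigO_exp_mul_sub_one_nhds_zero (c : ℝ) :
    (fun v : ℝ => exp (c * v) - 1) =O[𝓝 0] fun v => v := by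
  have hderiv : HasDerivAt (fun v : ℝ => exp (c * v)) c 0 := by
    simpa using ((hasDerivAt_id (0 : ℝ)).const_mul c).exp
  simpa using hderiv.isBigO_sub

section UpperGamma

/-- The upper incomplete Gamma integral with rate `θ`; for `θ > 0` and `v > 0` it equals
`θ ^ (-s) * Γ(s, θ v)`. The inner integral defining `A(t)` is `exp (2 * θ * v)` times its value at
`s = 2 * H - 1`. -/
noncomputable def upperGamma (θ s v : ℝ) : ℝ :=
  ∫ x in Ioi v, x ^ (s - 1) * exp (-(θ * x))

variable {θ s v : ℝ}

theorem integrableOn_rpow_mul_exp_neg_mul_Ioi_zero (hθ : 0 < θ) (hs : 0 < s) :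
    IntegrableOn (fun x : ℝ => x ^ (s - 1) * exp (-(θ * x))) (Ioi 0) := by
  simpa using integrableOn_rpow_mul_exp_neg_mul_rpow (s := s - 1) (by linarith) one_pos hθ

theorem integrableOn_rpow_mul_exp_neg_mul_Ioi (hθ : 0 < θ) (r : ℝ) (hv : 0 < v) :
    IntegrableOn (fun x : ℝ => x ^ r * exp (-(θ * x))) (Ioi v) := by
  refine integrable_of_isBigO_exp_neg (half_pos hθ) ?_ ?_
  · refine ContinuousOn.mul (fun x hx => ?_) (by fun_prop)
    exact (continuousAt_rpow_const x r (Or.inl (hv.trans_le hx).ne')).continuousWithinAt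
  · refine ((isLittleO_rpow_exp_pos_mul_atTop r (half_pos hθ)).isBigO.mul
      (isBigO_refl (fun x => exp (-(θ * x))) atTop)).congr_right fun x => ?_
    rw [← exp_add]
    ring_nf

theorem upperGamma_zero (hθ : 0 < θ) (hs : 0 < s) : upperGamma θ s 0 = θ ^ (-s) * Gamma s := by
  rw [upperGamma, integral_rpow_mul_exp_neg_mul_Ioi hs hθ, one_div, inv_rpow hθ.le, rpow_neg hθ.le]

theorem mul_upperGamma (hθ : 0 < θ) (s : ℝ) (hv : 0 < v) :
    s * upperGamma θ s v = θ * upperGamma θ (s + 1) v - v ^ s * exp (-(θ * v)) := by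
  have hderiv : ∀ x ∈ Ici v, HasDerivAt (fun x : ℝ => x ^ s * exp (-(θ * x)))
      (s * (x ^ (s - 1) * exp (-(θ * x))) - θ * (x ^ s * exp (-(θ * x)))) x := fun x hx => by
    have hexp : HasDerivAt (fun x : ℝ => exp (-(θ * x))) (exp (-(θ * x)) * -θ) x := by
      simpa using ((hasDerivAt_id x).const_mul θ).neg.exp
    refine ((hasDerivAt_rpow_const (Or.inl (hv.trans_le hx).ne')).mul hexp).congr_deriv ?_
    ring
  have hlim : Tendsto (fun x : ℝ => x ^ s * exp (-(θ * x))) atTop (𝓝 0) := by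
    simpa only [neg_mul] using tendsto_rpow_mul_exp_neg_mul_atTop_nhds_zero s θ hθ
  have hfst := (integrableOn_rpow_mul_exp_neg_mul_Ioi hθ (s - 1) hv).const_mul s
  have hsnd := (integrableOn_rpow_mul_exp_neg_mul_Ioi hθ s hv).const_mul θ
  have hftc := integral_Ioi_of_hasDerivAt_of_tendsto' hderiv (hfst.sub hsnd) hlim
  rw [integral_sub hfst hsnd, integral_const_mul, integral_const_mul] at hftc
  simp only [upperGamma, add_sub_cancel_right]
  linarith

theorem continuousOn_upperGamma (hθ : 0 < θ) (hs : 0 < s) :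
    ContinuousOn (upperGamma θ s) (Ici 0) :=
  (integrableOn_rpow_mul_exp_neg_mul_Ioi_zero hθ hs).continuousOn_Ici_primitive_Ioi

theorem upperGamma_sub_upperGamma_zero (hθ : 0 < θ) (hs : 0 < s) (hv : 0 ≤ v) :
    upperGamma θ s v - upperGamma θ s 0 = -∫ x in (0 : ℝ)..v, x ^ (s - 1) * exp (-(θ * x)) := by
  have hintegrable := integrableOn_rpow_mul_exp_neg_mul_Ioi_zero hθ hs
  have hsplit := intervalIntegral.integral_interval_add_Ioi hintegrable
    (hintegrable.mono_set (Ioi_subset_Ioi hv))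
  rw [upperGamma, upperGamma]
  linarith

theorem isBigO_upperGamma_sub_upperGamma_zero (hθ : 0 < θ) (hs : 0 < s) :
    (fun v => upperGamma θ s v - upperGamma θ s 0) =O[𝓝[>] 0] fun v => v ^ s := by
  have hintegrand : (fun x : ℝ => x ^ (s - 1) * exp (-(θ * x))) =O[𝓝[>] 0]
      fun x => x ^ (s - 1) := by
    simpa using (isBigO_refl (fun x : ℝ => x ^ (s - 1)) (𝓝[>] 0)).mul
      ((isBigO_exp_mul_one_nhds_zero (-θ)).mono nhdsWithin_le_nhds)
  have hintegral := (isBigO_integral_rpow (by linarith) hintegrand).neg_left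
  rw [sub_add_cancel] at hintegral
  refine hintegral.congr' ?_ EventuallyEq.rfl
  filter_upwards [self_mem_nhdsWithin] with v (hv : 0 < v)
  exact (upperGamma_sub_upperGamma_zero hθ hs hv.le).symm

theorem isLittleO_exp_mul_upperGamma_sub_upperGamma_zero (hθ : 0 < θ) (hs : 0 < s) (hs' : s < 2)
    (c : ℝ) :
    (fun v => exp (c * v) * upperGamma θ s v - upperGamma θ s 0) =o[𝓝[>] 0]
      fun v => v ^ (s - 1) := by
  have hexp : (fun v : ℝ => exp (c * v) - 1) =O[𝓝[>] 0] fun v => v :=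
    (isBigO_exp_mul_sub_one_nhds_zero c).mono nhdsWithin_le_nhds
  have hid : (fun v : ℝ => v) =o[𝓝[>] 0] fun v => v ^ (s - 1) := by
    simpa using isLittleO_rpow_rpow_nhdsGT_zero (a := s - 1) (b := 1) (by linarith)
  have htail : (fun v => exp (c * v) * (upperGamma θ s v - upperGamma θ s 0)) =O[𝓝[>] 0]
      fun v => v ^ s := by
    simpa using ((isBigO_exp_mul_one_nhds_zero c).mono nhdsWithin_le_nhds).mul
      (isBigO_upperGamma_sub_upperGamma_zero hθ hs)
  have hpow : (fun v : ℝ => v ^ s) =o[𝓝[>] 0] fun v => v ^ (s - 1) :=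
    isLittleO_rpow_rpow_nhdsGT_zero (by linarith)
  refine (((hexp.trans_isLittleO hid).const_mul_left (upperGamma θ s 0)).add
    (htail.trans_isLittleO hpow)).congr_left fun v => ?_
  ring

theorem sub_one_mul_exp_mul_upperGamma_sub_one (hθ : 0 < θ) (s c : ℝ) (hv : 0 < v) :
    (s - 1) * (exp (c * v) * upperGamma θ (s - 1) v) =
      θ * (exp (c * v) * upperGamma θ s v) - v ^ (s - 1) * exp ((c - θ) * v) := by
  have hrec := mul_upperGamma hθ (s - 1) hv
  rw [sub_add_cancel] at hrec
  have hexp : exp ((c - θ) * v) = exp (c * v) * exp (-(θ * v)) := by rw [← exp_add]; ring_nf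
  rw [hexp]
  linear_combination exp (c * v) * hrec

theorem isLittleO_sub_one_mul_exp_mul_upperGamma_sub_one (hθ : 0 < θ) (hs : 0 < s) (hs' : s < 2)
    (c : ℝ) :
    (fun v => (s - 1) * (exp (c * v) * upperGamma θ (s - 1) v) - θ * upperGamma θ s 0
      + v ^ (s - 1)) =o[𝓝[>] 0] fun v => v ^ (s - 1) := by
  have hmain := (isLittleO_exp_mul_upperGamma_sub_upperGamma_zero hθ hs hs' c).const_mul_left θ
  have hexp : (fun v : ℝ => exp ((c - θ) * v) - 1) =o[𝓝[>] 0] fun _ => (1 : ℝ) :=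
    ((isBigO_exp_mul_sub_one_nhds_zero _).trans_isLittleO
      ((isLittleO_one_iff ℝ).2 tendsto_id)).mono nhdsWithin_le_nhds
  have hpow : (fun v : ℝ => v ^ (s - 1) * (exp ((c - θ) * v) - 1)) =o[𝓝[>] 0]
      fun v => v ^ (s - 1) := by
    simpa using (isBigO_refl (fun v : ℝ => v ^ (s - 1)) (𝓝[>] 0)).mul_isLittleO hexp
  refine (hmain.sub hpow).congr' ?_ EventuallyEq.rfl
  filter_upwards [self_mem_nhdsWithin] with v (hv : 0 < v)
  rw [sub_one_mul_exp_mul_upperGamma_sub_one hθ s c hv]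
  ring

theorem intervalIntegrable_sub_one_mul_exp_mul_upperGamma_sub_one (hθ : 0 < θ) (hs : 0 < s)
    (c : ℝ) {t : ℝ} (ht : 0 ≤ t) :
    IntervalIntegrable (fun v => (s - 1) * (exp (c * v) * upperGamma θ (s - 1) v)) volume 0 t := by
  have hcont : ContinuousOn (fun v => θ * (exp (c * v) * upperGamma θ s v)) (uIcc 0 t) := by
    rw [uIcc_of_le ht]
    have hcontΓ : ContinuousOn (upperGamma θ s) (Icc 0 t) :=
      (continuousOn_upperGamma hθ hs).mono Icc_subset_Ici_self
    fun_prop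
  have hpow : IntervalIntegrable (fun v : ℝ => v ^ (s - 1) * exp ((c - θ) * v)) volume 0 t :=
    (intervalIntegral.intervalIntegrable_rpow' (by linarith)).mul_continuousOn (by fun_prop)
  refine (hcont.intervalIntegrable.sub hpow).congr fun v hv => ?_
  rw [uIoc_of_le ht] at hv
  exact (sub_one_mul_exp_mul_upperGamma_sub_one hθ s c hv.1).symm

theorem isLittleO_integral_exp_mul_upperGamma_sub_one (hθ : 0 < θ) (hs : 0 < s) (hs' : s < 2)
    (c : ℝ) :
    (fun t => (s - 1) * (∫ v in (0 : ℝ)..t, exp (c * v) * upperGamma θ (s - 1) v)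
      - θ ^ (1 - s) * Gamma s * t + t ^ s / s) =o[𝓝[>] 0] fun t => t ^ s := by
  have hp : -1 < s - 1 := by linarith
  have hintegral := isLittleO_integral_rpow hp
    (isLittleO_sub_one_mul_exp_mul_upperGamma_sub_one hθ hs hs' c)
  rw [sub_add_cancel] at hintegral
  refine hintegral.congr' ?_ EventuallyEq.rfl
  filter_upwards [self_mem_nhdsWithin] with t (ht : 0 < t)
  have hleft := intervalIntegrable_sub_one_mul_exp_mul_upperGamma_sub_one hθ hs c ht.le
  have hconst : θ * upperGamma θ s 0 = θ ^ (1 - s) * Gamma s := by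
    rw [upperGamma_zero hθ hs, ← mul_assoc, sub_eq_add_neg, rpow_add hθ, rpow_one]
  rw [intervalIntegral.integral_add (hleft.sub intervalIntegrable_const)
      (intervalIntegral.intervalIntegrable_rpow' hp),
    intervalIntegral.integral_sub hleft intervalIntegrable_const,
    intervalIntegral.integral_const_mul, intervalIntegral.integral_const, integral_zero_rpow hp,
    hconst, sub_add_cancel, sub_zero, smul_eq_mul, mul_comm t]

theorem integral_exp_add_mul_rpow (θ s b v : ℝ) :
    ∫ x in Ioi v, exp (-θ * x + b) * x ^ (s - 1) = exp b * upperGamma θ s v := by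
  rw [upperGamma, ← integral_const_mul]
  congr 1 with x
  rw [exp_add]
  ring_nf

end UpperGamma

theorem stmt_16_general (H θ : ℝ) (h1 : 0 < H) (h2 : H < 1) (hθ : 0 < θ) :
    Tendsto (fun t : ℝ =>
      ((H * (2 * H - 1) * ∫ v in (0 : ℝ)..t, ∫ x in Ioi v,
          exp (-θ * x + 2 * θ * v) * x ^ (2 * H - 2))
        - θ ^ (1 - 2 * H) * H * Gamma (2 * H) * t + (1 / 2) * t ^ (2 * H)) / t ^ (2 * H))
      (𝓝[>] 0) (𝓝 0) := by
  have hexpansion := (isLittleO_integral_exp_mul_upperGamma_sub_one hθ (s := 2 * H) (by linarith)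
    (by linarith) (2 * θ)).const_mul_left H
  refine (hexpansion.congr_left fun t => ?_).tendsto_div_nhds_zero
  simp only [← integral_exp_add_mul_rpow, sub_sub, one_add_one_eq_two]
  field_simp

theorem stmt_16 (H θ : ℝ) (h1 : 1/2 < H) (h2 : H < 1) (hθ : 0 < θ) :
    Tendsto (fun t : ℝ =>
      ((H * (2*H - 1) * ∫ v in (0:ℝ)..t, ∫ x in Ioi v,
          Real.exp (-θ*x + 2*θ*v) * x ^ (2*H - 2))
        - θ ^ (1 - 2*H) * H * Real.Gamma (2*H) * t + (1/2) * t ^ (2*H)) / t ^ (2*H))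
      (nhdsWithin 0 (Ioi 0)) (nhds 0) :=
  stmt_16_general H θ (by linarith) h2 hθ
end
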